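/- arXiv:2304.00273 — 8 statements merged into one kernel-verified Lean document; each statement's English description precedes it below -/
import Mathlib

section
/- Every finite-dimensional Zinbiel superalgebra over an arbitrary field is nilpotent: if Z = Z₀ ⊕ Z₁ is a Zinbiel superalgebra over a field K with dim_K Z < ∞, then there exists s ≥ 1 such that Z^s = 0. -/
open Module Submodule

/-- A Zinbiel superalgebra over a field `K`: a `K`-vector space `Z` with a bilinear
multiplication and a direct sum decomposition `Z = Z₀ ⊕ Z₁` such that
`Zᵢ·Zⱼ ⊆ Z_{i+j (mod 2)}` and, for all homogeneous `x, y, z`,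
`(x·y)·z = x·(y·z + (−1)^{|y||z|} z·y)`. -/
structure ZinbielSuper (K : Type*) [Field K] (Z : Type*) [AddCommGroup Z] [Module K Z] where
  mul : Z →ₗ[K] Z →ₗ[K] Z
  Z0 : Submodule K Z
  Z1 : Submodule K Z
  compl : IsCompl Z0 Z1
  mul00 : ∀ x ∈ Z0, ∀ y ∈ Z0, mul x y ∈ Z0
  mul01 : ∀ x ∈ Z0, ∀ y ∈ Z1, mul x y ∈ Z1
  mul10 : ∀ x ∈ Z1, ∀ y ∈ Z0, mul x y ∈ Z1
  mul11 : ∀ x ∈ Z1, ∀ y ∈ Z1, mul x y ∈ Z0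
  zinb_even : ∀ x y z : Z, (x ∈ Z0 ∨ x ∈ Z1) → (y ∈ Z0 ∨ y ∈ Z1) → (z ∈ Z0 ∨ z ∈ Z1) →
    (y ∈ Z0 ∨ z ∈ Z0) → mul (mul x y) z = mul x (mul y z + mul z y)
  zinb_odd : ∀ x y z : Z, (x ∈ Z0 ∨ x ∈ Z1) → y ∈ Z1 → z ∈ Z1 →
    mul (mul x y) z = mul x (mul y z - mul z y)

variable {K : Type*} [Field K] {Z : Type*} [AddCommGroup Z] [Module K Z]

/-- The linear span of all products `a·b` with `a ∈ A`, `b ∈ B`. -/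
def mulSub (mul : Z →ₗ[K] Z →ₗ[K] Z) (A B : Submodule K Z) : Submodule K Z :=
  Submodule.span K {z : Z | ∃ a ∈ A, ∃ b ∈ B, mul a b = z}

/-- `lcs S k = Z^k` for `k ≥ 1`: `Z¹ = Z`, `Z^{k+1} = Z·Z^k`. (`lcs S 0 = ⊤` by convention.) -/
def lcs (S : ZinbielSuper K Z) : ℕ → Submodule K Z
  | 0 => ⊤
  | 1 => ⊤
  | (k+2) => mulSub S.mul ⊤ (lcs S (k+1))

set_option linter.unusedSimpArgs false

theorem star_assoc' {mul star : Z →ₗ[K] Z →ₗ[K] Z} {p : Z →ₗ[K] Z}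
    (h1 : ∀ x y z, mul (mul x y) z = mul x (star y z))
    (h2 : ∀ y z, star y z = mul y z + mul z y - (2 : K) • mul (p z) (p y))
    (hp : ∀ x, p (p x) = p x)
    (pm : ∀ x y, p (mul x y) = mul (p x) (y - p y) + mul (x - p x) (p y)) (x y z : Z) :
    star (star x y) z = star x (star y z) := by
  simp only [h2, map_add, map_sub, map_smul, LinearMap.add_apply, LinearMap.sub_apply,
    LinearMap.smul_apply, h1, pm, hp, smul_add, smul_sub, smul_smul]
  module

theorem star_idem {mul star : Z →ₗ[K] Z →ₗ[K] Z} {p : Z →ₗ[K] Z}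
    (h1 : ∀ x y z, mul (mul x y) z = mul x (star y z))
    (h2 : ∀ y z, star y z = mul y z + mul z y - (2 : K) • mul (p z) (p y))
    (hp : ∀ x, p (p x) = p x)
    (pm : ∀ x y, p (mul x y) = mul (p x) (y - p y) + mul (x - p x) (p y)) (e : Z)
    (he : star e e = e) : e = 0 := by
  have key : ∀ a, p a = 0 → star a a = a → a = 0 := by
    intro a ha hs
    have h3 : (2 : K) • mul a a = a := by
      rw [← hs.trans rfl]
      conv_lhs => rw [hs]
      rw [h2, ha]; simp; module
    have h4 : mul (mul a a) a = mul a a := by rw [h1, hs]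
    have h5 : mul a a = a := by
      calc mul a a = mul ((2 : K) • mul a a) a := by rw [h3]
        _ = a := by rw [map_smul, LinearMap.smul_apply, h4, h3]
    rw [h5] at h3
    have : (2 : K) • a - a = a := by module
    rw [← this, h3, sub_self]
  have hb : p e = (2 : K) • (mul (p e) (e - p e) + mul (e - p e) (p e)) := by
    conv_lhs => rw [← he, h2]
    simp only [map_add, map_sub, map_smul, LinearMap.add_apply, LinearMap.sub_apply,
      LinearMap.smul_apply, pm, hp]
    module
  have ha : e - p e = 0 := by
    apply key
    · simp [hp]
    · conv_rhs => rw [hb]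
      conv_rhs => enter [1]; rw [← he]
      simp only [h2, map_add, map_sub, map_smul, LinearMap.add_apply, LinearMap.sub_apply,
        LinearMap.smul_apply, hp]
      module
  rw [ha] at hb
  simp at hb
  rw [hb] at ha; simpa using ha

theorem star_nil [FiniteDimensional K Z] {star : Z →ₗ[K] Z →ₗ[K] Z}
    (ha : ∀ x y z, star (star x y) z = star x (star y z))
    (hi : ∀ e, star e e = e → e = 0) (z : Z) : IsNilpotent (star z) := by
  open Polynomial in
  set f : Module.End K Z := star z with hf
  have hq : ∀ q : K[X], star (aeval f q z) = aeval f q * f := by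
    intro q
    induction q using Polynomial.induction_on' with
    | add q r hq hr => simp [add_mul, hq, hr]
    | monomial n c =>
      rw [aeval_monomial]
      have : ∀ n : ℕ, star ((f ^ n) z) = f ^ n * f := by
        intro n
        induction n with
        | zero => simp [hf]
        | succ n ih =>
          ext w
          rw [pow_succ', Module.End.mul_apply, hf, ha, ← hf, ih]
          rfl
      ext w
      simp [this, Module.algebraMap_end_apply]
  obtain ⟨g, hg, hgX⟩ := Polynomial.exists_eq_pow_rootMultiplicity_mul_and_not_dvd
    (minpoly K f) (minpoly.ne_zero (Algebra.IsIntegral.isIntegral f)) 0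
  set k := (minpoly K f).rootMultiplicity 0
  simp only [map_zero, sub_zero] at hg hgX
  have hco : IsCoprime (X ^ (k + 1)) g :=
    IsCoprime.pow_left ((Polynomial.irreducible_X.coprime_iff_not_dvd).2 hgX)
  obtain ⟨a, b, hab⟩ := hco
  have hz : aeval f (X ^ k * g) = 0 := by rw [← hg]; exact minpoly.aeval K f
  have he : star (aeval f (a * X ^ k) z) (aeval f (a * X ^ k) z) = aeval f (a * X ^ k) z := by
    rw [hq]
    have h1 : aeval f (a * X ^ k) * f = aeval f (a * X ^ (k + 1)) := by
      simp [pow_succ, mul_assoc]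
    rw [h1, eq_sub_of_add_eq hab, ← Module.End.mul_apply, ← map_mul]
    have : (1 - b * g) * (a * X ^ k) = a * X ^ k - (a * b) * (X ^ k * g) := by ring
    rw [this, map_sub, map_mul (aeval f) (a * b), hz]; simp
  have h0 := hi _ he
  have h1 : aeval f (a * X ^ (k + 1)) = 0 := by
    have := hq (a * X ^ k)
    rw [h0, map_zero] at this
    rw [pow_succ, ← mul_assoc, map_mul, aeval_X, ← this]
  refine ⟨k, ?_⟩
  have : f ^ k = aeval f (X ^ k * (a * X ^ (k+1) + b * g)) := by rw [hab]; simp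
  rw [this]
  have : X ^ k * (a * X ^ (k+1) + b * g) = X ^ k * (a * X ^ (k+1)) + b * (X ^ k * g) := by ring
  rw [this, map_add, map_mul, h1, map_mul (aeval f) b, hz]; simp

section EngelStep

attribute [local instance] LieRing.ofAssociativeRing LieAlgebra.ofAssociativeAlgebra LieRingModule.ofAssociativeModule LieModule.ofAssociativeModule

theorem star_stable [FiniteDimensional K Z] {star : Z →ₗ[K] Z →ₗ[K] Z}
    (ha : ∀ x y z, star (star x y) z = star x (star y z))
    (hn : ∀ z, IsNilpotent (star z)) (C : Submodule K Z) (hC : C ≤ mulSub star ⊤ C) :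
    C = ⊥ := by
  let L : LieSubalgebra K (Module.End K Z) :=
    { LinearMap.range star with
      lie_mem' := by
        rintro _ _ ⟨x, rfl⟩ ⟨y, rfl⟩
        refine ⟨star x y - star y x, ?_⟩
        ext w
        simp [ha, Ring.lie_def] }
  have hN : LieModule.IsNilpotent L Z := by
    rw [LieModule.isNilpotent_iff_forall' (R := K)]
    rintro ⟨_, x, rfl⟩
    exact hn x
  have hlow : ∀ k, C ≤ (LieModule.lowerCentralSeries K L Z k : Submodule K Z) := by
    intro k
    induction k with
    | zero => simp
    | succ k ih =>
      refine hC.trans ?_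
      rw [mulSub, Submodule.span_le]
      rintro _ ⟨a, -, b, hb, rfl⟩
      rw [LieModule.lowerCentralSeries_succ]
      exact LieSubmodule.lie_mem_lie (x := (⟨star a, a, rfl⟩ : L)) (LieSubmodule.mem_top _) (ih hb)
  obtain ⟨k, hk⟩ := (LieModule.isNilpotent_iff K L Z).1 hN
  have := hlow k
  rw [hk] at this
  simpa using this

end EngelStep

/-- graded two-sided ideal, with respect to the odd projection `p` -/
structure GrIdeal (mul : Z →ₗ[K] Z →ₗ[K] Z) (p : Z →ₗ[K] Z) (Q : Submodule K Z) : Prop where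
  left : ∀ x, ∀ q ∈ Q, mul x q ∈ Q
  right : ∀ x, ∀ q ∈ Q, mul q x ∈ Q
  gr : ∀ q ∈ Q, p q ∈ Q

theorem mem_mulSub {mul : Z →ₗ[K] Z →ₗ[K] Z} {B : Submodule K Z} (a : Z) {b : Z} (hb : b ∈ B) :
    mul a b ∈ mulSub mul ⊤ B := Submodule.subset_span ⟨a, trivial, b, hb, rfl⟩

theorem mulSub_le {mul : Z →ₗ[K] Z →ₗ[K] Z} {B D : Submodule K Z}
    (h : ∀ a, ∀ b ∈ B, mul a b ∈ D) : mulSub mul ⊤ B ≤ D := by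
  rw [mulSub, Submodule.span_le]
  rintro _ ⟨a, -, b, hb, rfl⟩
  exact h a b hb

theorem step_contra [FiniteDimensional K Z] {mul star : Z →ₗ[K] Z →ₗ[K] Z} {p : Z →ₗ[K] Z}
    (h1 : ∀ x y z, mul (mul x y) z = mul x (star y z))
    (h2 : ∀ y z, star y z = mul y z + mul z y - (2 : K) • mul (p z) (p y))
    (hp : ∀ x, p (p x) = p x)
    (pm : ∀ x y, p (mul x y) = mul (p x) (y - p y) + mul (x - p x) (p y))
    (Q I : Submodule K Z) (hQ : GrIdeal mul p Q) (hI : GrIdeal mul p I)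
    (hII : I ≤ mulSub mul ⊤ I)
    (hmax : ∀ J, GrIdeal mul p J → Q ≤ J → (∃ i ∈ J, i ∉ Q) → I ≤ J)
    (i : Z) (hiI : i ∈ I) (hiQ : i ∉ Q) (hs : ∀ z, star z i ∈ Q) (hpi : p i = 0 ∨ p i = i) :
    I ≤ Q ⊔ mulSub star ⊤ I := by
  have hs' : ∀ z, star i z ∈ Q := by
    intro z
    rcases hpi with h | h
    · have := hs z
      rw [h2, h] at this
      rw [h2, h]
      simpa [add_comm] using this
    · have := hs (z - (2 : K) • p z)
      rw [h2, h] at this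
      rw [h2, h]
      convert this using 1
      simp only [map_sub, map_smul, hp, LinearMap.sub_apply, LinearMap.smul_apply]
      module
  set Y1 : Submodule K Z := LinearMap.range (mul.flip i) with hY1
  set Y2 : Submodule K Z := mulSub mul ⊤ Y1 with hY2
  have mY1 : ∀ x, mul x i ∈ Y1 := fun x => ⟨x, rfl⟩
  have pY1 : ∀ y ∈ Y1, p y ∈ Y1 := by
    rintro _ ⟨x, rfl⟩
    rw [LinearMap.flip_apply, pm]
    rcases hpi with h | h
    · rw [h]; simpa using mY1 _
    · rw [h]; simpa using mY1 (x - p x)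
  have rY1 : ∀ z, ∀ y ∈ Y1, mul y z ∈ Q := by
    rintro z _ ⟨x, rfl⟩
    rw [LinearMap.flip_apply, h1]
    exact hQ.left _ _ (hs' z)
  have pY2 : ∀ y ∈ Y2, p y ∈ Y2 := by
    intro y hy
    have : Y2 ≤ Y2.comap p := by
      refine mulSub_le fun a b hb => ?_
      rw [Submodule.mem_comap, pm]
      exact add_mem (mem_mulSub _ (sub_mem hb (pY1 _ hb))) (mem_mulSub _ (pY1 _ hb))
    exact this hy
  have iz : ∀ z, mul i z ∈ Q ⊔ Y1 := by
    intro z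
    have : mul i z = star i z + ((2 : K) • mul (p z) (p i) - mul z i) := by rw [h2]; module
    rw [this]
    refine Submodule.add_mem_sup (hs' z) (sub_mem (Submodule.smul_mem _ _ ?_) (mY1 _))
    rcases hpi with h | h <;> rw [h]
    · simp
    · exact mY1 _
  have lY2 : ∀ x, ∀ w ∈ Y2, mul x w ∈ Q ⊔ Y2 := by
    intro x w hw
    have : Y2 ≤ (Q ⊔ Y2).comap (mul x) := by
      refine mulSub_le fun a b hb => ?_
      rw [Submodule.mem_comap]
      have e : mul x (mul a b) = ((2 : K) • mul x (mul (p b) (p a)) - mul x (mul b a)) +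
          mul (mul x a) b := by
        rw [h1, h2]; simp only [map_add, map_sub, map_smul]; module
      rw [e]
      exact Submodule.add_mem_sup (sub_mem (Q.smul_mem _ (hQ.left _ _ (rY1 _ _ (pY1 _ hb))))
        (hQ.left _ _ (rY1 _ _ hb))) (mem_mulSub _ hb)
    exact this hw
  have lQY2 : ∀ x, ∀ w ∈ Q ⊔ Y2, mul x w ∈ Q ⊔ Y2 := by
    intro x w hw
    have : Q ⊔ Y2 ≤ (Q ⊔ Y2).comap (mul x) :=
      sup_le (fun q hq => Submodule.mem_sup_left (hQ.left _ _ hq)) (fun q hq => lY2 _ _ hq)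
    exact this hw
  have rY2 : ∀ z, ∀ w ∈ Y2, mul w z ∈ Q ⊔ Y2 := by
    intro z w hw
    have : Y2 ≤ (Q ⊔ Y2).comap (mul.flip z) := by
      refine mulSub_le fun a b hb => ?_
      rw [Submodule.mem_comap, LinearMap.flip_apply, h1]
      apply lQY2
      rw [h2]
      exact sub_mem (Submodule.add_mem_sup (rY1 _ _ hb) (mem_mulSub _ hb))
        (Submodule.smul_mem _ _ (Submodule.mem_sup_right (mem_mulSub _ (pY1 _ hb))))
    exact this hw
  have gY2 : Y2 ≤ Q ⊔ mulSub star ⊤ I := by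
    refine mulSub_le fun a b hb => ?_
    have e : mul a b = ((2 : K) • mul (p b) (p a) - mul b a) + star a b := by rw [h2]; module
    rw [e]
    refine Submodule.add_mem_sup (sub_mem (Q.smul_mem _ (rY1 _ _ (pY1 _ hb))) (rY1 _ _ hb))
      (mem_mulSub _ ?_)
    obtain ⟨x, rfl⟩ := hb
    exact hI.left _ _ hiI
  set J : Submodule K Z := ((Q ⊔ Y2) ⊔ Y1) ⊔ Submodule.span K {i} with hJ
  have leQ : Q ≤ J := le_sup_left.trans (le_sup_left.trans le_sup_left)
  have leY1 : Y1 ≤ J := le_sup_right.trans le_sup_left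
  have leQY2 : Q ⊔ Y2 ≤ J := le_sup_left.trans le_sup_left
  have lY1' : ∀ x, ∀ w ∈ (Q ⊔ Y2) ⊔ Y1, mul x w ∈ Q ⊔ Y2 := by
    intro x w hw
    have : (Q ⊔ Y2) ⊔ Y1 ≤ (Q ⊔ Y2).comap (mul x) :=
      sup_le (fun q hq => lQY2 _ _ hq) (fun q hq => Submodule.mem_sup_right (mem_mulSub _ hq))
    exact this hw
  have lJ : ∀ x, ∀ w ∈ J, mul x w ∈ (Q ⊔ Y2) ⊔ Y1 := by
    intro x w hw
    have : J ≤ ((Q ⊔ Y2) ⊔ Y1).comap (mul x) := by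
      refine sup_le (fun q hq => Submodule.mem_sup_left (lY1' _ _ hq)) ?_
      rw [Submodule.span_singleton_le_iff_mem]
      exact Submodule.mem_sup_right (mY1 _)
    exact this hw
  have hJi : GrIdeal mul p J := by
    refine ⟨fun x q hq => Submodule.mem_sup_left (lJ x q hq), fun x q hq => ?_, fun q hq => ?_⟩
    · have : J ≤ J.comap (mul.flip x) := by
        refine sup_le (sup_le (sup_le (fun q hq => leQ (hQ.right _ _ hq))
          (fun q hq => leQY2 (rY2 _ _ hq))) (fun q hq => leQ (rY1 _ _ hq))) ?_
        rw [Submodule.span_singleton_le_iff_mem]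
        exact (sup_le leQ leY1) (iz x)
      exact this hq
    · have : J ≤ J.comap p := by
        refine sup_le (sup_le (sup_le (fun q hq => leQ (hQ.gr _ hq))
          (fun q hq => leQY2 (Submodule.mem_sup_right (pY2 _ hq)))) (fun q hq => leY1 (pY1 _ hq))) ?_
        rw [Submodule.span_singleton_le_iff_mem, Submodule.mem_comap]
        rcases hpi with h | h <;> rw [h]
        · simp
        · exact Submodule.mem_sup_right (Submodule.mem_span_singleton_self i)
      exact this hq
  have hIJ : I ≤ J :=
    hmax J hJi leQ ⟨i, Submodule.mem_sup_right (Submodule.mem_span_singleton_self i), hiQ⟩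
  have hIJ1 : I ≤ (Q ⊔ Y2) ⊔ Y1 := hII.trans (mulSub_le fun a b hb => lJ a b (hIJ hb))
  have hIJ2 : I ≤ Q ⊔ Y2 := hII.trans (mulSub_le fun a b hb => lY1' a b (hIJ1 hb))
  exact hIJ2.trans (sup_le le_sup_left gY2)

theorem stab_of_anti [FiniteDimensional K Z] (f : ℕ → Submodule K Z)
    (h : ∀ n, f (n + 1) ≤ f n) : ∃ n, f (n + 1) = f n := by
  obtain ⟨n, hn⟩ := IsArtinian.monotone_stabilizes (R := K) (M := Z)
    ⟨fun n => OrderDual.toDual (f n), monotone_nat_of_le_succ h⟩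
  exact ⟨n, (hn (n + 1) (Nat.le_succ n)).symm⟩

theorem ideal_bot [FiniteDimensional K Z] {mul star : Z →ₗ[K] Z →ₗ[K] Z} {p : Z →ₗ[K] Z}
    (h1 : ∀ x y z, mul (mul x y) z = mul x (star y z))
    (h2 : ∀ y z, star y z = mul y z + mul z y - (2 : K) • mul (p z) (p y))
    (hp : ∀ x, p (p x) = p x)
    (pm : ∀ x y, p (mul x y) = mul (p x) (y - p y) + mul (x - p x) (p y))
    (I : Submodule K Z) (hI : GrIdeal mul p I) (hII : I ≤ mulSub mul ⊤ I) : I = ⊥ := by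
  have ha := star_assoc' h1 h2 hp pm
  have hst := star_stable ha (star_nil ha (star_idem h1 h2 hp pm))
  have starI : ∀ Q, GrIdeal mul p Q → ∀ z, ∀ q ∈ Q, star z q ∈ Q := by
    intro Q hQ z q hq
    rw [h2]
    exact sub_mem (add_mem (hQ.left _ _ hq) (hQ.right _ _ hq))
      (Q.smul_mem _ (hQ.right _ _ (hQ.gr _ hq)))
  let C : ℕ → Submodule K Z := fun n => (mulSub star ⊤)^[n] I
  have C0 : C 0 = I := rfl
  have Cs : ∀ n, C (n + 1) = mulSub star ⊤ (C n) := fun n => Function.iterate_succ_apply' _ _ _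
  have Cdec : ∀ n, C (n + 1) ≤ C n := by
    intro n
    induction n with
    | zero => rw [Cs, C0]; exact mulSub_le fun a b hb => starI I hI a b hb
    | succ n ih => rw [Cs (n + 1), Cs n]; rw [Cs] at ih
                   exact mulSub_le fun a b hb => mem_mulSub a (ih hb)
  have CI : ∀ n, C n ≤ I := by
    intro n
    induction n with
    | zero => exact le_rfl
    | succ n ih => exact (Cdec n).trans ih
  have Cgr : ∀ n, ∀ c ∈ C n, p c ∈ C n := by
    intro n
    induction n with
    | zero => exact hI.gr
    | succ n ih =>
      intro c hc
      have : C (n + 1) ≤ (C (n + 1)).comap p := by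
        rw [Cs]
        refine mulSub_le fun a b hb => ?_
        rw [Submodule.mem_comap]
        have e : p (star a b) = star (p a) (b - p b) + star (a - p a) (p b) := by
          simp only [h2, map_add, map_sub, map_smul, LinearMap.add_apply, LinearMap.sub_apply,
            LinearMap.smul_apply, pm, hp]
          module
        rw [e]
        exact add_mem (mem_mulSub _ (sub_mem hb (ih _ hb))) (mem_mulSub _ (ih _ hb))
      exact this hc
  obtain ⟨N, hN⟩ := stab_of_anti C Cdec
  have hCN : C N = ⊥ := hst _ (by rw [← Cs, hN])
  by_contra hne
  have hbot : GrIdeal mul p (⊥ : Submodule K Z) :=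
    ⟨by simp, by simp, by simp⟩
  obtain ⟨Q, ⟨hQ, hIQ⟩, hmax⟩ := (wellFounded_gt (α := Submodule K Z)).has_min
    {Q | GrIdeal mul p Q ∧ ¬ I ≤ Q} ⟨⊥, hbot, by simpa using hne⟩
  have hex : ∃ n, C n ≤ Q := ⟨N, by rw [hCN]; exact bot_le⟩
  classical
  obtain ⟨k, hk, hkn⟩ : ∃ k, C (k + 1) ≤ Q ∧ ¬ C k ≤ Q := by
    by_contra! hcon
    obtain ⟨n, hn⟩ := hex
    have : ∀ n, C n ≤ Q → C 0 ≤ Q := by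
      intro n
      induction n with
      | zero => exact id
      | succ n ih => exact fun h => ih (hcon n h)
    exact hIQ (this n hn)
  obtain ⟨i, hiC, hiQ, hpi⟩ : ∃ i ∈ C k, i ∉ Q ∧ (p i = 0 ∨ p i = i) := by
    obtain ⟨j, hj, hjQ⟩ := SetLike.not_le_iff_exists.1 hkn
    by_cases h : p j ∈ Q
    · refine ⟨j - p j, sub_mem hj (Cgr _ _ hj), fun h' => hjQ ?_, Or.inl (by simp [hp])⟩
      simpa using add_mem h' h
    · exact ⟨p j, Cgr _ _ hj, h, Or.inr (hp j)⟩
  have key : I ≤ Q ⊔ mulSub star ⊤ I := by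
    refine step_contra h1 h2 hp pm Q I hQ hI hII ?_ i (CI _ hiC) hiQ ?_ hpi
    · rintro J hJ hQJ ⟨j, hj, hjQ⟩
      by_contra hIJ
      exact hmax J ⟨hJ, hIJ⟩ (lt_of_le_not_ge hQJ fun h => hjQ (h hj))
    · intro z
      apply hk
      rw [Cs]
      exact mem_mulSub _ hiC
  have keyn : ∀ n, I ≤ Q ⊔ C n := by
    intro n
    induction n with
    | zero => exact le_sup_right
    | succ n ih =>
      refine key.trans (sup_le le_sup_left (mulSub_le fun a b hb => ?_))
      have : Q ⊔ C n ≤ (Q ⊔ C (n + 1)).comap (star a) := by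
        refine sup_le (fun q hq => Submodule.mem_sup_left (starI Q hQ _ _ hq))
          (fun q hq => Submodule.mem_sup_right ?_)
        rw [Cs]; exact mem_mulSub _ hq
      exact this (ih hb)
  apply hIQ
  simpa [hCN] using keyn N

/-- Every finite-dimensional Zinbiel superalgebra over an arbitrary field is nilpotent. -/
theorem zinbielSuper_nilpotent (K : Type*) [Field K] (Z : Type*) [AddCommGroup Z]
    [Module K Z] [FiniteDimensional K Z] (S : ZinbielSuper K Z) :
    ∃ s : ℕ, 1 ≤ s ∧ lcs S s = ⊥ := by
  let p : Z →ₗ[K] Z := S.Z1.projection S.Z0 S.compl.symm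
  have p1 : ∀ x, p x ∈ S.Z1 := fun x => Submodule.projection_apply_mem _ x
  have pe1 : ∀ x ∈ S.Z1, p x = x := fun x hx =>
    Submodule.projection_apply_of_mem_left _ hx
  have pe0 : ∀ x ∈ S.Z0, p x = 0 := fun x hx =>
    (Submodule.projection_apply_eq_zero_iff S.compl.symm).2 hx
  have hp : ∀ x, p (p x) = p x := fun x => pe1 _ (p1 x)
  have p0 : ∀ x, x - p x ∈ S.Z0 := fun x =>
    (Submodule.projection_apply_eq_zero_iff S.compl.symm).1 (by
      change p (x - p x) = 0
      simp [hp])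
  have ind : ∀ (P : Z → Prop), (∀ x y, P x → P y → P (x + y)) → (∀ x ∈ S.Z0, P x) →
      (∀ x ∈ S.Z1, P x) → ∀ x, P x := by
    intro P ha h0 h1 x
    have := ha _ _ (h0 _ (p0 x)) (h1 _ (p1 x))
    simpa using this
  have pm : ∀ x y, p (S.mul x y) = S.mul (p x) (y - p y) + S.mul (x - p x) (p y) := by
    refine ind _ ?_ ?_ ?_
    · intro x x' h h' y
      simp only [map_add, map_sub, LinearMap.add_apply, LinearMap.sub_apply, h, h']
      abel
    all_goals
      intro x hx
      refine ind _ ?_ ?_ ?_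
      · intro y y' h h'
        simp only [map_add, map_sub, LinearMap.add_apply, LinearMap.sub_apply, h, h']
        abel
    · intro y hy
      rw [pe0 x hx, pe0 y hy, pe0 _ (S.mul00 x hx y hy)]; simp
    · intro y hy
      rw [pe0 x hx, pe1 y hy, pe1 _ (S.mul01 x hx y hy)]; simp
    · intro y hy
      rw [pe1 x hx, pe0 y hy, pe1 _ (S.mul10 x hx y hy)]; simp
    · intro y hy
      rw [pe1 x hx, pe1 y hy, pe0 _ (S.mul11 x hx y hy)]; simp
  let star : Z →ₗ[K] Z →ₗ[K] Z :=
    S.mul + S.mul.flip - (2 : K) • (S.mul.compl₁₂ p p).flip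
  have h2 : ∀ y z, star y z = S.mul y z + S.mul z y - (2 : K) • S.mul (p z) (p y) :=
    fun y z => rfl
  have h1 : ∀ x y z, S.mul (S.mul x y) z = S.mul x (star y z) := by
    have hom : ∀ x, (x ∈ S.Z0 ∨ x ∈ S.Z1) → ∀ y z,
        S.mul (S.mul x y) z = S.mul x (star y z) := by
      intro x hx
      refine ind _ ?_ ?_ ?_
      · intro y y' h h' z
        simp only [map_add, LinearMap.add_apply, h, h']
      all_goals
        intro y hy
        refine ind _ ?_ ?_ ?_
        · intro z z' h h'
          simp only [map_add, h, h']
      · intro z hz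
        rw [S.zinb_even x y z hx (Or.inl hy) (Or.inl hz) (Or.inl hy), h2, pe0 y hy]; simp
      · intro z hz
        rw [S.zinb_even x y z hx (Or.inl hy) (Or.inr hz) (Or.inl hy), h2, pe0 y hy]; simp
      · intro z hz
        rw [S.zinb_even x y z hx (Or.inr hy) (Or.inl hz) (Or.inr hz), h2, pe0 z hz]; simp
      · intro z hz
        rw [S.zinb_odd x y z hx hy hz, h2, pe1 y hy, pe1 z hz]
        congr 1; module
    refine ind _ ?_ (fun x hx => hom x (Or.inl hx)) (fun x hx => hom x (Or.inr hx))
    intro x x' h h' y z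
    simp only [map_add, LinearMap.add_apply, h, h']
  have ls : ∀ n, lcs S (n + 2) = mulSub S.mul ⊤ (lcs S (n + 1)) := fun n => rfl
  have l1 : lcs S (0 + 1) = ⊤ := rfl
  have dec : ∀ n, lcs S (n + 1 + 1) ≤ lcs S (n + 1) := by
    intro n
    induction n with
    | zero => rw [l1]; exact le_top
    | succ n ih =>
      rw [ls (n + 1), ls n]
      exact mulSub_le fun a b hb => mem_mulSub a (ih hb)
  have gi : ∀ n, GrIdeal S.mul p (lcs S (n + 1)) := by
    intro n
    induction n with
    | zero => rw [l1]; exact ⟨by simp, by simp, by simp⟩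
    | succ n ih =>
      refine ⟨fun x q hq => ?_, fun x q hq => ?_, fun q hq => ?_⟩
      · exact mem_mulSub x (dec n hq)
      · have : lcs S (n + 1 + 1) ≤ (lcs S (n + 1 + 1)).comap (S.mul.flip x) := by
          refine mulSub_le fun a b hb => ?_
          rw [Submodule.mem_comap, LinearMap.flip_apply, h1, h2]
          exact mem_mulSub _ (sub_mem (add_mem (ih.right _ _ hb) (ih.left _ _ hb))
            (Submodule.smul_mem _ _ (ih.left _ _ (ih.gr _ hb))))
        exact this hq
      · have : lcs S (n + 1 + 1) ≤ (lcs S (n + 1 + 1)).comap p := by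
          refine mulSub_le fun a b hb => ?_
          rw [Submodule.mem_comap, pm]
          exact add_mem (mem_mulSub _ (sub_mem hb (ih.gr _ hb))) (mem_mulSub _ (ih.gr _ hb))
        exact this hq
  obtain ⟨n, hn⟩ := stab_of_anti (fun n => lcs S (n + 1)) dec
  exact ⟨n + 1, Nat.le_add_left 1 n, ideal_bot h1 h2 hp pm _ (gi n) hn.symm.le⟩
end

section
/- Every finite-dimensional Zinbiel superalgebra over an arbitrary field is solvable: if Z = Z₀ ⊕ Z₁ is a Zinbiel superalgebra over a field K with dim_K Z < ∞, then there exists s ≥ 1 such that Z^(s) = 0, where Z^(1) = Z and Z^(k+1) = Z^(k)·Z^(k) is the linear span of all products a·b with a, b ∈ Z^(k). -/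
open Module Submodule

variable {K : Type*} [Field K] {Z : Type*} [AddCommGroup Z] [Module K Z]

/-- The derived series: `Z^(1) = Z`, `Z^(k+1) = Z^(k)·Z^(k)`. (`derSeries S 0 = ⊤` by convention.) -/
def derSeries (S : ZinbielSuper K Z) : ℕ → Submodule K Z
  | 0 => ⊤
  | 1 => ⊤
  | (k+2) => mulSub S.mul (derSeries S (k+1)) (derSeries S (k+1))


namespace ZinbielSuper


/-- Homogeneous elements. -/
def Hom (S : ZinbielSuper K Z) (x : Z) : Prop := x ∈ S.Z0 ∨ x ∈ S.Z1

theorem decomp (S : ZinbielSuper K Z) (x : Z) : ∃ u ∈ S.Z0, ∃ v ∈ S.Z1, u + v = x := by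
  have : x ∈ S.Z0 ⊔ S.Z1 := by rw [S.compl.sup_eq_top]; trivial
  exact Submodule.mem_sup.1 this

theorem even' (S : ZinbielSuper K Z) (x y z : Z) (hy : S.Hom y) (hz : S.Hom z)
    (h : y ∈ S.Z0 ∨ z ∈ S.Z0) : S.mul (S.mul x y) z = S.mul x (S.mul y z + S.mul z y) := by
  obtain ⟨u, hu, v, hv, rfl⟩ := S.decomp x
  have h1 := S.zinb_even u y z (Or.inl hu) hy hz h
  have h2 := S.zinb_even v y z (Or.inr hv) hy hz h
  simp only [map_add, LinearMap.add_apply] at *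
  rw [h1, h2]; abel

theorem odd' (S : ZinbielSuper K Z) (x y z : Z) (hy : y ∈ S.Z1) (hz : z ∈ S.Z1) :
    S.mul (S.mul x y) z = S.mul x (S.mul y z - S.mul z y) := by
  obtain ⟨u, hu, v, hv, rfl⟩ := S.decomp x
  have h1 := S.zinb_odd u y z (Or.inl hu) hy hz
  have h2 := S.zinb_odd v y z (Or.inr hv) hy hz
  simp only [map_add, map_sub, LinearMap.add_apply] at *
  rw [h1, h2]; abel

/-- Right multiplications by homogeneous elements commute up to sign. -/
theorem comm' (S : ZinbielSuper K Z) (x y z : Z) (hy : S.Hom y) (hz : S.Hom z) :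
    S.mul (S.mul x y) z = S.mul (S.mul x z) y ∨
    S.mul (S.mul x y) z = - S.mul (S.mul x z) y := by
  by_cases h : y ∈ S.Z0 ∨ z ∈ S.Z0
  · left
    rw [S.even' x y z hy hz h, S.even' x z y hz hy h.symm, add_comm]
  · right
    have hy1 : y ∈ S.Z1 := hy.resolve_left fun h' => h (Or.inl h')
    have hz1 : z ∈ S.Z1 := hz.resolve_left fun h' => h (Or.inr h')
    rw [S.odd' x y z hy1 hz1, S.odd' x z y hz1 hy1, ← map_neg, neg_sub]

/-- Left-normed-to-the-right powers: `pw a n = a·(a·(⋯·a))` with `n+1` factors. -/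
def pw (S : ZinbielSuper K Z) (a : Z) : ℕ → Z
  | 0 => a
  | n + 1 => S.mul a (pw S a n)

theorem pw_mem (S : ZinbielSuper K Z) {a : Z} (ha : a ∈ S.Z0) (n : ℕ) : S.pw a n ∈ S.Z0 := by
  induction n with
  | zero => exact ha
  | succ n ih => exact S.mul00 _ ha _ ih

theorem pw_mul (S : ZinbielSuper K Z) {a : Z} (ha : a ∈ S.Z0) (n : ℕ) :
    S.mul (S.pw a n) a = ((n + 1 : ℕ) : K) • S.pw a (n + 1) := by
  induction n with
  | zero => simp [pw]
  | succ n ih =>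
    have h := S.even' a (S.pw a n) a (Or.inl (S.pw_mem ha n)) (Or.inl ha) (Or.inr ha)
    change S.mul (S.mul a (S.pw a n)) a = _ • S.mul a (S.mul a (S.pw a n))
    rw [h, ih]
    change S.mul a (_ • S.mul a (S.pw a n) + S.mul a (S.pw a n)) = _
    rw [map_add, map_smul]
    push_cast
    module

theorem R_pow (S : ZinbielSuper K Z) {a : Z} (ha : a ∈ S.Z0) (n : ℕ) (x : Z) :
    ((S.mul.flip a) ^ (n + 1)) x = ((n + 1).factorial : K) • S.mul x (S.pw a n) := by
  induction n with
  | zero => simp [pw]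
  | succ n ih =>
    rw [pow_succ', Module.End.mul_apply, ih, map_smul, LinearMap.flip_apply,
      S.even' x (S.pw a n) a (Or.inl (S.pw_mem ha n)) (Or.inl ha) (Or.inr ha), S.pw_mul ha]
    change _ • S.mul x (_ • S.pw a (n + 1) + S.pw a (n + 1)) = _
    rw [map_add, map_smul, Nat.factorial_succ (n + 1)]
    push_cast
    module

theorem pw_zero_of_dep [CharZero K] (S : ZinbielSuper K Z) {a : Z} (ha : a ∈ S.Z0)
    (s : Finset ℕ) : ∀ (c : ℕ → K) (k : ℕ), ∑ i ∈ s, c i • S.pw a (i + k) = 0 →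
      (∃ i ∈ s, c i ≠ 0) → ∃ n, S.pw a n = 0 := by
  induction s using Finset.induction_on with
  | empty => rintro c k - ⟨i, hi, -⟩; simp at hi
  | insert N s hN ih =>
    intro c k h0 hne
    by_cases hs : ∃ i ∈ s, c i ≠ 0
    · obtain ⟨i, hi, hci⟩ := hs
      refine ih (fun i => ((i : K) - N) * c i) (k + 1) ?_ ⟨i, hi, mul_ne_zero ?_ hci⟩
      · have h1 := congrArg (S.mul.flip a) h0
        have h2 := congrArg (S.mul a) h0
        rw [map_sum, map_zero] at h1 h2
        have e1 : ∀ i, S.mul.flip a (c i • S.pw a (i + k))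
            = c i • ((i + k + 1 : ℕ) : K) • S.pw a (i + (k + 1)) := by
          intro i
          rw [map_smul, LinearMap.flip_apply, S.pw_mul ha]; rfl
        have e2 : ∀ i, S.mul a (c i • S.pw a (i + k)) = c i • S.pw a (i + (k + 1)) := by
          intro i
          rw [map_smul]; rfl
        simp only [e1] at h1
        simp only [e2] at h2
        have h3 : ∑ i ∈ insert N s, (((i : K) - N) * c i) • S.pw a (i + (k + 1)) = 0 := by
          calc _ = ∑ i ∈ insert N s, c i • ((i + k + 1 : ℕ) : K) • S.pw a (i + (k + 1))
                - ((N + k + 1 : ℕ) : K) • ∑ i ∈ insert N s, c i • S.pw a (i + (k + 1)) := by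
                rw [Finset.smul_sum, ← Finset.sum_sub_distrib]
                refine Finset.sum_congr rfl fun i _ => ?_
                push_cast
                module
            _ = 0 := by rw [h1, h2]; simp
        rw [Finset.sum_insert hN] at h3
        simpa using h3
      · rw [sub_ne_zero]
        intro h
        exact hN (Nat.cast_injective h ▸ hi)
    · push Not at hs
      rw [Finset.sum_insert hN, Finset.sum_eq_zero, add_zero] at h0
      · obtain ⟨i, hi, hci⟩ := hne
        rcases Finset.mem_insert.1 hi with rfl | hi
        · exact ⟨_, (smul_eq_zero.1 h0).resolve_left hci⟩
        · exact absurd (hs i hi) hci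
      · intro i hi
        rw [hs i hi, zero_smul]

theorem R_nilp [FiniteDimensional K Z] (S : ZinbielSuper K Z) {a : Z} (ha : S.Hom a) :
    ∃ n, (S.mul.flip a) ^ n = 0 := by
  rcases ha with ha | ha
  · by_cases hc : ∀ n : ℕ, (n : K) = 0 → n = 0
    · haveI : CharZero K := charZero_of_inj_zero hc
      have hdep : ¬ LinearIndependent K (S.pw a) := fun h => by
        have := h.finite
        exact not_finite ℕ
      rw [linearIndependent_iff'] at hdep
      push Not at hdep
      obtain ⟨s, g, hg, hne⟩ := hdep
      obtain ⟨n, hn⟩ := S.pw_zero_of_dep ha s g 0 (by simpa using hg) hne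
      refine ⟨n + 1, LinearMap.ext fun x => ?_⟩
      rw [S.R_pow ha, hn]; simp
    · push Not at hc
      obtain ⟨n, hn, hn0⟩ := hc
      obtain ⟨m, rfl⟩ := Nat.exists_eq_succ_of_ne_zero hn0
      refine ⟨m + 1, LinearMap.ext fun x => ?_⟩
      rw [S.R_pow ha, Nat.factorial_succ, Nat.cast_mul]
      simp only [Nat.succ_eq_add_one] at hn
      rw [hn]; simp
  · refine ⟨2, LinearMap.ext fun x => ?_⟩
    rw [pow_two, Module.End.mul_apply, LinearMap.flip_apply, LinearMap.flip_apply,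
      S.odd' x a a ha ha]
    simp

theorem eq_bot_of_le [FiniteDimensional K Z] (S : ZinbielSuper K Z) (W : Submodule K Z)
    (hW : ∀ w ∈ W, ∀ z, S.mul w z ∈ W) (s : Set Z) (hs : s.Finite) : (∀ a ∈ s, S.Hom a) →
      W ≤ ⨆ b ∈ s, W.map (S.mul.flip b) → W = ⊥ := by
  induction s, hs using Set.Finite.induction_on with
  | empty => intro _ h; simpa using h
  | @insert a s _ _ ih =>
    intro hom h
    refine ih (fun b hb => hom b (Set.mem_insert_of_mem _ hb)) ?_
    rw [iSup_insert] at h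
    set W' := ⨆ b ∈ s, W.map (S.mul.flip b) with hW'
    have hst : W'.map (S.mul.flip a) ≤ W' := by
      conv_lhs => rw [hW']
      simp only [Submodule.map_iSup]
      refine iSup₂_le fun b hb => ?_
      rintro _ ⟨_, ⟨w, hw, rfl⟩, rfl⟩
      have hmem : S.mul (S.mul w a) b ∈ W' := by
        have : W.map (S.mul.flip b) ≤ W' := le_iSup₂_of_le b hb le_rfl
        exact this ⟨_, hW w hw a, rfl⟩
      simp only [LinearMap.flip_apply]
      rcases S.comm' w b a (hom b (Set.mem_insert_of_mem _ hb))
        (hom a (Set.mem_insert _ _)) with e | e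
      · rw [e]; exact hmem
      · rw [e]; exact W'.neg_mem hmem
    have hn : ∀ n, W ≤ W.map ((S.mul.flip a) ^ n) ⊔ W' := by
      intro n
      induction n with
      | zero => simp [Module.End.one_eq_id]
      | succ n ihn =>
        refine h.trans (sup_le ?_ le_sup_right)
        refine (Submodule.map_mono ihn).trans ?_
        rw [Submodule.map_sup, ← Submodule.map_comp, ← Module.End.mul_eq_comp, ← pow_succ']
        exact sup_le_sup le_rfl hst
    obtain ⟨n, h0⟩ := S.R_nilp (hom a (Set.mem_insert _ _))
    have := hn n
    rw [h0] at this
    simpa using this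

/-- Right powers. -/
def rp (S : ZinbielSuper K Z) : ℕ → Submodule K Z
  | 0 => ⊤
  | k + 1 => mulSub S.mul (rp S k) ⊤

theorem mulSub_mono (m : Z →ₗ[K] Z →ₗ[K] Z) {A A' B B' : Submodule K Z} (h : A ≤ A')
    (h' : B ≤ B') : mulSub m A B ≤ mulSub m A' B' := by
  refine Submodule.span_mono ?_
  rintro _ ⟨a, ha, b, hb, rfl⟩
  exact ⟨a, h ha, b, h' hb, rfl⟩

theorem der_le (S : ZinbielSuper K Z) (k : ℕ) : derSeries S (k + 1) ≤ S.rp k := by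
  induction k with
  | zero => exact le_top
  | succ k ih => exact mulSub_mono _ ih le_top

theorem rp_anti (S : ZinbielSuper K Z) : Antitone S.rp := by
  refine antitone_nat_of_succ_le fun k => ?_
  induction k with
  | zero => exact le_top
  | succ k ih => exact mulSub_mono _ ih le_rfl

theorem exists_gens [FiniteDimensional K Z] (S : ZinbielSuper K Z) :
    ∃ s : Set Z, s.Finite ∧ (∀ a ∈ s, S.Hom a) ∧ span K s = ⊤ := by
  obtain ⟨s0, h0⟩ := IsNoetherian.noetherian S.Z0
  obtain ⟨s1, h1⟩ := IsNoetherian.noetherian S.Z1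
  refine ⟨s0 ∪ s1, s0.finite_toSet.union s1.finite_toSet, ?_, ?_⟩
  · rintro a (ha | ha)
    · left; rw [← h0]; exact subset_span ha
    · right; rw [← h1]; exact subset_span ha
  · rw [span_union, h0, h1, S.compl.sup_eq_top]

theorem exists_rp_bot [FiniteDimensional K Z] (S : ZinbielSuper K Z) : ∃ k, S.rp k = ⊥ := by
  obtain ⟨k, hk⟩ := IsArtinian.monotone_stabilizes
    (⟨fun n => OrderDual.toDual (S.rp n), fun _ _ h => S.rp_anti h⟩ : ℕ →o (Submodule K Z)ᵒᵈ)
  have hk : S.rp k = mulSub S.mul (S.rp k) ⊤ := hk (k + 1) (Nat.le_succ k)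
  obtain ⟨s, hs, hom, hsp⟩ := S.exists_gens
  refine ⟨k, S.eq_bot_of_le (S.rp k) ?_ s hs hom ?_⟩
  · intro w hw z
    rw [hk]
    exact subset_span ⟨w, hw, z, trivial, rfl⟩
  · conv_lhs => rw [hk]
    refine span_le.2 ?_
    rintro _ ⟨w, hw, z, -, rfl⟩
    have hz : z ∈ span K s := by rw [hsp]; trivial
    have hle : span K s ≤ (⨆ b ∈ s, (S.rp k).map (S.mul.flip b)).comap (S.mul w) := by
      refine span_le.2 fun b hb => ?_
      have : (S.rp k).map (S.mul.flip b) ≤ ⨆ b ∈ s, (S.rp k).map (S.mul.flip b) :=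
        le_iSup₂_of_le b hb le_rfl
      exact this ⟨w, hw, rfl⟩
    exact hle hz

end ZinbielSuper

/-- Every finite-dimensional Zinbiel superalgebra over an arbitrary field is solvable. -/
theorem zinbielSuper_solvable (K : Type*) [Field K] (Z : Type*) [AddCommGroup Z]
    [Module K Z] [FiniteDimensional K Z] (S : ZinbielSuper K Z) :
    ∃ s : ℕ, 1 ≤ s ∧ derSeries S s = ⊥ := by
  obtain ⟨k, hk⟩ := S.exists_rp_bot
  exact ⟨k + 1, Nat.le_add_left 1 k, le_bot_iff.1 (hk ▸ S.der_le k)⟩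
end

section
/- Let Z = Z₀ ⊕ Z₁ be an n-dimensional null-filiform Zinbiel superalgebra over ℂ with Z₁ ≠ 0. Then either dim Z₁ = dim Z₀ or dim Z₁ = dim Z₀ + 1, and Z has a basis e₁, …, e_n with e_t ∈ Z₁ for t odd and e_t ∈ Z₀ for t even, whose multiplication is given (with the convention e_t = 0 whenever t > n) by: e_{2k+1}·e_{2l} = C(k+l, k) e_{2k+2l+1}; e_{2k}·e_{2l} = C(k+l−1, l) e_{2k+2l} for k, l ≥ 1; e_{2k+1}·e_{2l+1} = C(k+l, l) e_{2k+2l+2}; and e_{2k}·e_{2l+1} = 0. In particular, such a superalgebra is unique up to isomorphism for each pair (dim Z₀, dim Z₁). -/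
open Module Submodule

variable {K : Type*} [Field K] {Z : Type*} [AddCommGroup Z] [Module K Z]

/-- An `n`-dimensional Zinbiel superalgebra is null-filiform if `dim Z^i = n + 1 − i`
for `1 ≤ i ≤ n + 1`. -/
def NullFiliform (S : ZinbielSuper K Z) : Prop :=
  ∀ i : ℕ, 1 ≤ i → i ≤ finrank K Z + 1 →
    finrank K (lcs S i) = finrank K Z + 1 - i

/-- From a basis `b` indexed by `Fin n`, the family `e₁, …, e_n` (indexed by `1 ≤ t ≤ n`),
with the convention that out-of-range indices give `0`. -/
noncomputable def tB {n : ℕ} (b : Basis (Fin n) K Z) : ℕ → Z :=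
  fun t => if h : 1 ≤ t ∧ t ≤ n then b ⟨t - 1, by omega⟩ else 0

universe u v

namespace NF

def Gr (S : ZinbielSuper K Z) (A : Submodule K Z) : Prop :=
  ∀ x ∈ A, ∃ a ∈ A, ∃ b ∈ A, a ∈ S.Z0 ∧ b ∈ S.Z1 ∧ x = a + b

lemma gr_top (S : ZinbielSuper K Z) : Gr S ⊤ := by
  intro x _
  have hx : x ∈ S.Z0 ⊔ S.Z1 := by rw [S.compl.sup_eq_top]; trivial
  obtain ⟨a, ha, b, hb, h⟩ := Submodule.mem_sup.1 hx
  exact ⟨a, trivial, b, trivial, ha, hb, h.symm⟩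

lemma mul_mem_mulSub (S : ZinbielSuper K Z) (A : Submodule K Z) (x y : Z) (hy : y ∈ A) :
    S.mul x y ∈ mulSub S.mul ⊤ A :=
  Submodule.subset_span ⟨x, trivial, y, hy, rfl⟩

lemma gr_mulSub (S : ZinbielSuper K Z) {A : Submodule K Z} (hA : Gr S A) :
    Gr S (mulSub S.mul ⊤ A) := by
  intro x hx
  refine Submodule.span_induction (p := fun x _ => ∃ a ∈ mulSub S.mul ⊤ A,
    ∃ b ∈ mulSub S.mul ⊤ A, a ∈ S.Z0 ∧ b ∈ S.Z1 ∧ x = a + b) ?_ ?_ ?_ ?_ hx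
  · rintro _ ⟨u, -, v, hv, rfl⟩
    obtain ⟨u0, -, u1, -, hu0, hu1, rfl⟩ := gr_top S u trivial
    obtain ⟨v0, hv0A, v1, hv1A, hv0, hv1, rfl⟩ := hA v hv
    refine ⟨S.mul u0 v0 + S.mul u1 v1,
      add_mem (mul_mem_mulSub S A _ _ hv0A) (mul_mem_mulSub S A _ _ hv1A),
      S.mul u0 v1 + S.mul u1 v0,
      add_mem (mul_mem_mulSub S A _ _ hv1A) (mul_mem_mulSub S A _ _ hv0A),
      add_mem (S.mul00 _ hu0 _ hv0) (S.mul11 _ hu1 _ hv1),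
      add_mem (S.mul01 _ hu0 _ hv1) (S.mul10 _ hu1 _ hv0), ?_⟩
    simp only [map_add, LinearMap.add_apply]
    abel
  · exact ⟨0, zero_mem _, 0, zero_mem _, zero_mem _, zero_mem _, by simp⟩
  · rintro _ _ _ _ ⟨a, ha, b, hb, ha0, hb1, rfl⟩ ⟨c, hc, d, hd, hc0, hd1, rfl⟩
    exact ⟨a + c, add_mem ha hc, b + d, add_mem hb hd, add_mem ha0 hc0, add_mem hb1 hd1, by abel⟩
  · rintro r _ _ ⟨a, ha, b, hb, ha0, hb1, rfl⟩
    exact ⟨r • a, Submodule.smul_mem _ _ ha, r • b, Submodule.smul_mem _ _ hb,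
      Submodule.smul_mem _ _ ha0, Submodule.smul_mem _ _ hb1, by simp⟩

lemma gr_lcs (S : ZinbielSuper K Z) (k : ℕ) : Gr S (lcs S (k + 1)) := by
  induction k with
  | zero => exact gr_top S
  | succ k ih => exact gr_mulSub S ih

lemma mul_lcs (S : ZinbielSuper K Z) (k : ℕ) (x y : Z) (hy : y ∈ lcs S (k + 1)) :
    S.mul x y ∈ lcs S (k + 2) := mul_mem_mulSub S _ x y hy

lemma lcs_mul (S : ZinbielSuper K Z) (N : ℕ) : ∀ i j : ℕ, i + j = N →
    ∀ x ∈ lcs S (i + 1), ∀ y ∈ lcs S (j + 1), S.mul x y ∈ lcs S (N + 2) := by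
  induction N with
  | zero =>
    intro i j h x _ y hy
    exact mul_lcs S 0 x y trivial
  | succ N ih =>
    intro i j h x hx y hy
    rcases i with _ | i
    · obtain rfl : j = N + 1 := by omega
      exact mul_lcs S _ x y hy
    · have hx' : x ∈ Submodule.span K {z : Z | ∃ a ∈ (⊤ : Submodule K Z),
        ∃ b ∈ lcs S (i + 1), S.mul a b = z} := hx
      refine Submodule.span_induction (p := fun x _ => S.mul x y ∈ lcs S (N + 1 + 2))
        ?_ ?_ ?_ ?_ hx'
      · rintro _ ⟨u, -, v, hv, rfl⟩
        have key : ∀ u v y, (u ∈ S.Z0 ∨ u ∈ S.Z1) → (v ∈ S.Z0 ∨ v ∈ S.Z1) →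
            (y ∈ S.Z0 ∨ y ∈ S.Z1) → v ∈ lcs S (i + 1) → y ∈ lcs S (j + 1) →
            S.mul (S.mul u v) y ∈ lcs S (N + 1 + 2) := by
          intro u v y hu hv hy hvl hyl
          have m1 := ih i j (by omega) v hvl y hyl
          have m2 := ih j i (by omega) y hyl v hvl
          by_cases hc : v ∈ S.Z0 ∨ y ∈ S.Z0
          · rw [S.zinb_even u v y hu hv hy hc]
            exact mul_lcs S _ _ _ (add_mem m1 m2)
          · push Not at hc
            rw [S.zinb_odd u v y hu (hv.resolve_left hc.1) (hy.resolve_left hc.2)]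
            exact mul_lcs S _ _ _ (sub_mem m1 m2)
        obtain ⟨u0, -, u1, -, hu0, hu1, rfl⟩ := gr_top S u trivial
        obtain ⟨v0, hv0A, v1, hv1A, hv0, hv1, rfl⟩ := gr_lcs S i v hv
        obtain ⟨y0, hy0A, y1, hy1A, hy0, hy1, rfl⟩ := gr_lcs S j y hy
        simp only [map_add, LinearMap.add_apply]
        refine add_mem (add_mem (add_mem ?_ ?_) (add_mem ?_ ?_))
          (add_mem (add_mem ?_ ?_) (add_mem ?_ ?_)) <;>
        apply key <;> first | assumption | (left; assumption) | (right; assumption)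
      · simp
      · intro a b _ _ ha hb
        rw [map_add, LinearMap.add_apply]; exact add_mem ha hb
      · intro r a _ ha
        rw [map_smul, LinearMap.smul_apply]; exact Submodule.smul_mem _ _ ha

/-- the family of left powers of `x`, with `ee x 0 = 0`, `ee x 1 = x`. -/
def ee (S : ZinbielSuper K Z) (x : Z) : ℕ → Z
  | 0 => 0
  | 1 => x
  | (k+2) => S.mul x (ee S x (k+1))

lemma ee_mem (S : ZinbielSuper K Z) (x : Z) (k : ℕ) : ee S x (k + 1) ∈ lcs S (k + 1) := by
  induction k with
  | zero => trivial
  | succ k ih => exact mul_lcs S k _ _ ih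

lemma lcs_le (S : ZinbielSuper K Z) (x : Z) (hx : Submodule.span K {x} ⊔ lcs S 2 = ⊤) (k : ℕ) :
    lcs S (k + 1) ≤ Submodule.span K {ee S x (k + 1)} ⊔ lcs S (k + 2) := by
  induction k with
  | zero => exact hx.ge
  | succ k ih =>
    change Submodule.span K _ ≤ _
    rw [Submodule.span_le]
    rintro _ ⟨a, -, b, hb, rfl⟩
    have ha : a ∈ Submodule.span K {x} ⊔ lcs S 2 := by rw [hx]; trivial
    obtain ⟨a1, ha1, a', ha', rfl⟩ := Submodule.mem_sup.1 ha
    obtain ⟨α, rfl⟩ := Submodule.mem_span_singleton.1 ha1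
    obtain ⟨b1, hb1, b', hb', hbe⟩ := Submodule.mem_sup.1 (ih hb)
    obtain ⟨β, rfl⟩ := Submodule.mem_span_singleton.1 hb1
    have h1 : S.mul a' b ∈ lcs S (k + 1 + 2) := lcs_mul S (k + 1) 1 k (by omega) _ ha' _ hb
    have h2 : S.mul x b' ∈ lcs S (k + 1 + 2) := mul_lcs S (k + 1) _ _ hb'
    refine Submodule.mem_sup.2 ⟨(α * β) • ee S x (k + 2),
      Submodule.smul_mem _ _ (Submodule.mem_span_singleton_self _),
      α • S.mul x b' + S.mul a' b, add_mem (Submodule.smul_mem _ _ h2) h1, ?_⟩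
    rw [map_add, LinearMap.add_apply, map_smul, LinearMap.smul_apply]
    conv_rhs => rw [← hbe, map_add, map_smul]
    rw [hbe, smul_add, smul_smul, ← add_assoc]
    rfl

lemma top_le (S : ZinbielSuper K Z) (x : Z) (hx : Submodule.span K {x} ⊔ lcs S 2 = ⊤) (k : ℕ) :
    ⊤ ≤ Submodule.span K (Set.range fun i : Fin k => ee S x (i + 1)) ⊔ lcs S (k + 1) := by
  induction k with
  | zero => exact le_sup_right
  | succ k ih =>
    refine ih.trans (sup_le ?_ ((lcs_le S x hx k).trans (sup_le ?_ le_sup_right)))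
    · refine le_trans (Submodule.span_mono ?_) le_sup_left
      rintro _ ⟨i, rfl⟩
      exact ⟨i.castSucc, rfl⟩
    · refine le_trans (Submodule.span_mono ?_) le_sup_left
      rintro _ rfl
      exact ⟨Fin.last k, rfl⟩

/-- structure constants -/
def cc (s t : ℕ) : ℕ :=
  if s % 2 = 0 then (if t % 2 = 0 then (s / 2 + t / 2 - 1).choose (t / 2) else 0)
  else (s / 2 + t / 2).choose (s / 2)

lemma cc_ee (k l : ℕ) : cc (2 * k) (2 * l) = (k + l - 1).choose l := by
  have : 2 * k % 2 = 0 := by omega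
  have h2 : 2 * l % 2 = 0 := by omega
  have h3 : 2 * k / 2 = k := by omega
  have h4 : 2 * l / 2 = l := by omega
  simp only [cc, this, h2, h3, h4, if_true]

lemma cc_eo (k l : ℕ) : cc (2 * k) (2 * l + 1) = 0 := by
  have : 2 * k % 2 = 0 := by omega
  have h2 : ¬ (2 * l + 1) % 2 = 0 := by omega
  simp only [cc, this, h2, if_true, if_false]

lemma cc_oe (k l : ℕ) : cc (2 * k + 1) (2 * l) = (k + l).choose k := by
  have h2 : ¬ (2 * k + 1) % 2 = 0 := by omega
  have h3 : (2 * k + 1) / 2 = k := by omega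
  have h4 : 2 * l / 2 = l := by omega
  simp only [cc, h2, h3, h4, if_false]

lemma cc_oo (k l : ℕ) : cc (2 * k + 1) (2 * l + 1) = (k + l).choose k := by
  have h2 : ¬ (2 * k + 1) % 2 = 0 := by omega
  have h3 : (2 * k + 1) / 2 = k := by omega
  have h4 : (2 * l + 1) / 2 = l := by omega
  simp only [cc, h2, h3, h4, if_false]

lemma cc_one (t : ℕ) : cc 1 t = 1 := by simp [cc]

/-- recurrence, not both odd -/
lemma cc_rec_even (s t : ℕ) (hs : 1 ≤ s) (ht : 1 ≤ t) (h : Even s ∨ Even t) :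
    cc (s + 1) t = cc s t + cc t s := by
  rcases Nat.even_or_odd' s with ⟨k, rfl | rfl⟩ <;> rcases Nat.even_or_odd' t with ⟨l, rfl | rfl⟩
  · rw [cc_oe, cc_ee, cc_ee]
    obtain ⟨k, rfl⟩ : ∃ m, k = m + 1 := ⟨k - 1, by omega⟩
    obtain ⟨l, rfl⟩ : ∃ m, l = m + 1 := ⟨l - 1, by omega⟩
    have e1 : k + 1 + (l + 1) = (k + l + 1) + 1 := by omega
    have e2 : l + 1 + (k + 1) - 1 = k + l + 1 := by omega
    rw [e1, e2, Nat.choose_succ_succ, Nat.add_sub_cancel]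
    congr 1
    exact Nat.choose_symm_of_eq_add (by omega)
  · rw [cc_oo, cc_eo, cc_oe, zero_add, add_comm l k]
    exact Nat.choose_symm_of_eq_add rfl
  · rw [show 2 * k + 1 + 1 = 2 * (k + 1) by ring, cc_ee, cc_oe, cc_eo, add_zero,
      show k + 1 + l - 1 = k + l by omega]
    exact Nat.choose_symm_of_eq_add (by omega)
  · exfalso
    rcases h with h | h <;> · rw [Nat.even_iff] at h; omega

lemma cc_rec_odd (s t : ℕ) (h : Odd s) (h' : Odd t) :
    cc (s + 1) t = 0 ∧ cc s t = cc t s := by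
  obtain ⟨k, rfl⟩ := h
  obtain ⟨l, rfl⟩ := h'
  constructor
  · rw [show 2 * k + 1 + 1 = 2 * (k + 1) by ring, cc_eo]
  · rw [cc_oo, cc_oo, add_comm l k]
    exact Nat.choose_symm_of_eq_add rfl

lemma ee_parity (S : ZinbielSuper K Z) (x : Z) (hx : x ∈ S.Z1) (k : ℕ) :
    ee S x (2 * k) ∈ S.Z0 ∧ ee S x (2 * k + 1) ∈ S.Z1 := by
  induction k with
  | zero => exact ⟨zero_mem _, hx⟩
  | succ k ih =>
    have : ee S x (2 * (k + 1)) ∈ S.Z0 := S.mul11 _ hx _ ih.2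
    exact ⟨this, S.mul10 _ hx _ this⟩

lemma ee_even (S : ZinbielSuper K Z) (x : Z) (hx : x ∈ S.Z1) (t : ℕ) (h : Even t) :
    ee S x t ∈ S.Z0 := by
  obtain ⟨k, rfl⟩ := h
  rw [← two_mul]; exact (ee_parity S x hx k).1

lemma ee_odd (S : ZinbielSuper K Z) (x : Z) (hx : x ∈ S.Z1) (t : ℕ) (h : Odd t) :
    ee S x t ∈ S.Z1 := by
  obtain ⟨k, rfl⟩ := h
  exact (ee_parity S x hx k).2

lemma ee_hom (S : ZinbielSuper K Z) (x : Z) (hx : x ∈ S.Z1) (t : ℕ) :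
    ee S x t ∈ S.Z0 ∨ ee S x t ∈ S.Z1 :=
  (Nat.even_or_odd t).imp (ee_even S x hx t) (ee_odd S x hx t)

lemma ee_mul (S : ZinbielSuper K Z) (x : Z) (hx : x ∈ S.Z1) (N : ℕ) : ∀ s t : ℕ,
    s + t = N → 1 ≤ s → 1 ≤ t →
    S.mul (ee S x s) (ee S x t) = (cc s t : K) • ee S x (s + t) := by
  induction N with
  | zero => intro s t h hs; omega
  | succ N ih =>
    intro s t h hs ht
    obtain ⟨t, rfl⟩ : ∃ m, t = m + 1 := ⟨t - 1, by omega⟩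
    obtain _ | _ | s := s
    · omega
    · rw [zero_add, cc_one, Nat.cast_one, one_smul, show 1 + (t + 1) = t + 2 by ring]
      rfl
    · have i1 := ih (s + 1) (t + 1) (by omega) (by omega) (by omega)
      have i2 := ih (t + 1) (s + 1) (by omega) (by omega) (by omega)
      rw [show t + 1 + (s + 1) = s + 1 + (t + 1) by ring] at i2
      have e : ee S x (s + 1 + 1 + (t + 1)) = S.mul x (ee S x (s + 1 + (t + 1))) := by
        rw [show s + 1 + 1 + (t + 1) = (s + t + 1) + 2 by ring,
          show s + 1 + (t + 1) = (s + t + 1) + 1 by ring]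
        rfl
      change S.mul (S.mul x (ee S x (s + 1))) _ = _
      by_cases hp : Even (s + 1) ∨ Even (t + 1)
      · rw [S.zinb_even _ _ _ (Or.inr hx) (ee_hom S x hx _) (ee_hom S x hx _)
          (hp.imp (ee_even S x hx _) (ee_even S x hx _)), i1, i2,
          cc_rec_even _ _ (by omega) (by omega) hp, e, ← add_smul, map_smul, Nat.cast_add]
      · push Not at hp
        rw [Nat.not_even_iff_odd, Nat.not_even_iff_odd] at hp
        obtain ⟨c1, c2⟩ := cc_rec_odd _ _ hp.1 hp.2
        rw [S.zinb_odd _ _ _ (Or.inr hx) (ee_odd S x hx _ hp.1) (ee_odd S x hx _ hp.2), i1, i2,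
          c1, c2, sub_self, map_zero, Nat.cast_zero, zero_smul]

lemma exists_gen [FiniteDimensional K Z] (S : ZinbielSuper K Z) (hnf : NullFiliform S)
    (h1 : S.Z1 ≠ ⊥) : ∃ x ∈ S.Z1, Submodule.span K {x} ⊔ lcs S 2 = ⊤ := by
  have hpos : 1 ≤ finrank K Z := by
    by_contra h
    have h0 : finrank K Z = 0 := by omega
    have := finrank_zero_iff.1 h0
    exact h1 (Subsingleton.elim _ _)
  have hd : finrank K (lcs S 2) = finrank K Z + 1 - 2 := hnf 2 (by omega) (by omega)
  have hbot : lcs S (finrank K Z + 1) = ⊥ := by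
    have := hnf (finrank K Z + 1) (by omega) le_rfl
    rw [Nat.sub_self] at this
    exact Submodule.finrank_eq_zero.1 this
  have gen : ∀ x, x ∉ lcs S 2 → Submodule.span K {x} ⊔ lcs S 2 = ⊤ := by
    intro x hx
    apply Submodule.eq_top_of_finrank_eq
    have hlt : lcs S 2 < Submodule.span K {x} ⊔ lcs S 2 := by
      refine lt_of_le_of_ne le_sup_right fun h => hx ?_
      rw [h]
      exact Submodule.mem_sup_left (Submodule.mem_span_singleton_self x)
    have a1 := Submodule.finrank_lt_finrank_of_lt hlt
    have a2 := Submodule.finrank_le (Submodule.span K {x} ⊔ lcs S 2)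
    omega
  by_cases hZ1 : S.Z1 ≤ lcs S 2
  · exfalso
    by_cases hZ0 : S.Z0 ≤ lcs S 2
    · have : lcs S 2 = ⊤ := top_le_iff.1 (S.compl.sup_eq_top ▸ sup_le hZ0 hZ1)
      rw [this, finrank_top] at hd
      omega
    · obtain ⟨x, hx, hx'⟩ := SetLike.not_le_iff_exists.1 hZ0
      have ht := top_le S x (gen x hx') (finrank K Z)
      rw [hbot, sup_bot_eq] at ht
      have hm : ∀ k, ee S x (k + 1) ∈ S.Z0 := by
        intro k
        induction k with
        | zero => exact hx
        | succ k ih => exact S.mul00 _ hx _ ih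
      have : (⊤ : Submodule K Z) ≤ S.Z0 := by
        refine ht.trans (Submodule.span_le.2 ?_)
        rintro _ ⟨i, rfl⟩
        exact hm i
      apply h1
      have h := S.compl.inf_eq_bot
      rwa [top_le_iff.1 this, top_inf_eq] at h
  · obtain ⟨x, hx, hx'⟩ := SetLike.not_le_iff_exists.1 hZ1
    exact ⟨x, hx, gen x hx'⟩

lemma eq_of_compl {A B C D : Submodule K Z} (h : IsCompl C D) (hA : A ≤ C) (hB : B ≤ D)
    (ht : A ⊔ B = ⊤) : A = C := by
  refine le_antisymm hA fun c hc => ?_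
  have : c ∈ A ⊔ B := by rw [ht]; trivial
  obtain ⟨a, ha, b, hb, rfl⟩ := Submodule.mem_sup.1 this
  have hbC : b ∈ C := by simpa using C.sub_mem hc (hA ha)
  have : b ∈ C ⊓ D := ⟨hbC, hB hb⟩
  rw [h.inf_eq_bot] at this
  rw [(Submodule.mem_bot K).1 this, add_zero]; exact ha

lemma tB_succ {n : ℕ} (b : Basis (Fin n) K Z) (i : Fin n) : tB b (i + 1) = b i := by
  have : 1 ≤ (i : ℕ) + 1 ∧ (i : ℕ) + 1 ≤ n := by omega
  simp [tB, this]

lemma main [FiniteDimensional K Z] (S : ZinbielSuper K Z) (hnf : NullFiliform S)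
    (h1 : S.Z1 ≠ ⊥) (n : ℕ) (hn : finrank K Z = n) :
    ∃ b : Basis (Fin n) K Z, (∀ t, Odd t → tB b t ∈ S.Z1) ∧ (∀ t, Even t → tB b t ∈ S.Z0) ∧
      (∀ s t, 1 ≤ s → 1 ≤ t → S.mul (tB b s) (tB b t) = (cc s t : K) • tB b (s + t)) ∧
      Submodule.span K (tB b '' {t | Even t}) = S.Z0 ∧
      Submodule.span K (tB b '' {t | Odd t}) = S.Z1 := by
  subst hn
  obtain ⟨x, hx, hgen⟩ := exists_gen S hnf h1
  have hbot : lcs S (finrank K Z + 1) = ⊥ := by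
    have := hnf (finrank K Z + 1) (by omega) le_rfl
    rw [Nat.sub_self] at this
    exact Submodule.finrank_eq_zero.1 this
  have ht := top_le S x hgen (finrank K Z)
  rw [hbot, sup_bot_eq] at ht
  let b := basisOfTopLeSpanOfCardEqFinrank (fun i : Fin (finrank K Z) => ee S x (i + 1)) ht
    (by simp)
  have hb : ∀ i, b i = ee S x (i + 1) := fun i => by simp [b]
  have hz : ∀ k, ee S x (finrank K Z + 1 + k) = 0 := by
    intro k
    induction k with
    | zero =>
      have := ee_mem S x (finrank K Z)
      rw [hbot] at this
      exact (Submodule.mem_bot K).1 this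
    | succ k ih =>
      rw [show finrank K Z + 1 + (k + 1) = finrank K Z + k + 2 by ring]
      change S.mul x (ee S x (finrank K Z + k + 1)) = 0
      rw [show finrank K Z + k + 1 = finrank K Z + 1 + k by ring, ih, map_zero]
  have hT : ∀ t, tB b t = ee S x t := by
    intro t
    by_cases h : 1 ≤ t ∧ t ≤ finrank K Z
    · have := hb ⟨t - 1, by omega⟩
      rw [← tB_succ] at this
      simpa [Nat.sub_add_cancel h.1] using this
    · rw [tB]
      simp only [h, dif_neg, not_false_eq_true]
      by_cases h0 : t = 0
      · subst h0; rfl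
      · have := hz (t - (finrank K Z + 1))
        rw [show finrank K Z + 1 + (t - (finrank K Z + 1)) = t by omega] at this
        exact this.symm
  have ho : ∀ t, Odd t → tB b t ∈ S.Z1 := fun t h => by rw [hT]; exact ee_odd S x hx t h
  have hev : ∀ t, Even t → tB b t ∈ S.Z0 := fun t h => by rw [hT]; exact ee_even S x hx t h
  have A0 : Submodule.span K (tB b '' {t | Even t}) ≤ S.Z0 := by
    rw [Submodule.span_le]; rintro _ ⟨t, h, rfl⟩; exact hev t h
  have A1 : Submodule.span K (tB b '' {t | Odd t}) ≤ S.Z1 := by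
    rw [Submodule.span_le]; rintro _ ⟨t, h, rfl⟩; exact ho t h
  have At : Submodule.span K (tB b '' {t | Even t}) ⊔ Submodule.span K (tB b '' {t | Odd t})
      = ⊤ := by
    rw [← top_le_iff, ← b.span_eq, Submodule.span_le, ← Submodule.span_union]
    rintro _ ⟨i, rfl⟩
    apply Submodule.subset_span
    rw [← tB_succ]
    exact (Nat.even_or_odd (i + 1)).imp (fun h => ⟨_, h, rfl⟩) (fun h => ⟨_, h, rfl⟩)
  refine ⟨b, ho, hev, ?_, eq_of_compl S.compl A0 A1 At,
    eq_of_compl S.compl.symm A1 A0 (by rw [sup_comm]; exact At)⟩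
  intro s t hs ht
  simp only [hT]
  exact ee_mul S x hx _ s t rfl hs ht

lemma dims [FiniteDimensional K Z] (S : ZinbielSuper K Z) (n : ℕ) (b : Basis (Fin n) K Z)
    (ho : ∀ t, Odd t → tB b t ∈ S.Z1) (he : ∀ t, Even t → tB b t ∈ S.Z0) :
    finrank K S.Z0 = n / 2 ∧ finrank K S.Z1 = (n + 1) / 2 := by
  have hs := Submodule.finrank_add_eq_of_isCompl S.compl
  rw [finrank_eq_card_basis b, Fintype.card_fin] at hs
  have c0 : n / 2 ≤ finrank K S.Z0 := by
    let f : Fin (n / 2) → Fin n := fun i => ⟨2 * i + 1, by omega⟩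
    have hf : Function.Injective f := fun i j h => by
      simp only [f, Fin.mk.injEq] at h; omega
    let g : Fin (n / 2) → S.Z0 := fun i => ⟨b (f i), by
      rw [← tB_succ]; exact he _ ⟨i + 1, by simp only [f]; ring⟩⟩
    have hg : LinearIndependent K g := by
      apply LinearIndependent.of_comp S.Z0.subtype
      exact b.linearIndependent.comp f hf
    simpa using hg.fintype_card_le_finrank
  have c1 : (n + 1) / 2 ≤ finrank K S.Z1 := by
    let f : Fin ((n + 1) / 2) → Fin n := fun i => ⟨2 * i, by omega⟩
    have hf : Function.Injective f := fun i j h => by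
      simp only [f, Fin.mk.injEq] at h; omega
    let g : Fin ((n + 1) / 2) → S.Z1 := fun i => ⟨b (f i), by
      rw [← tB_succ]; exact ho _ ⟨i, by simp only [f]⟩⟩
    have hg : LinearIndependent K g := by
      apply LinearIndependent.of_comp S.Z1.subtype
      exact b.linearIndependent.comp f hf
    simpa using hg.fintype_card_le_finrank
  omega

end NF


/-- An `n`-dimensional null-filiform Zinbiel superalgebra over `ℂ` with nonzero odd part
satisfies `dim Z₁ = dim Z₀` or `dim Z₁ = dim Z₀ + 1`, has a homogeneous basis
`e₁, …, e_n` (odd for odd index, even for even index) whose multiplication is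
`e_{2k+1}·e_{2l} = C(k+l, k) e_{2k+2l+1}`, `e_{2k}·e_{2l} = C(k+l−1, l) e_{2k+2l}` (`k,l ≥ 1`),
`e_{2k+1}·e_{2l+1} = C(k+l, l) e_{2k+2l+2}`, `e_{2k}·e_{2l+1} = 0` (with `e_t = 0` for `t > n`);
in particular it is unique up to isomorphism for each pair `(dim Z₀, dim Z₁)`. -/
theorem nullFiliform_classification
    {Z : Type u} [AddCommGroup Z] [Module ℂ Z] [FiniteDimensional ℂ Z]
    (S : ZinbielSuper ℂ Z) (hnf : NullFiliform S) (h1 : S.Z1 ≠ ⊥) :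
    (finrank ℂ S.Z1 = finrank ℂ S.Z0 ∨ finrank ℂ S.Z1 = finrank ℂ S.Z0 + 1) ∧
    (∃ b : Basis (Fin (finrank ℂ Z)) ℂ Z,
      (∀ t : ℕ, Odd t → tB b t ∈ S.Z1) ∧
      (∀ t : ℕ, Even t → tB b t ∈ S.Z0) ∧
      (∀ k l : ℕ, 1 ≤ l →
        S.mul (tB b (2 * k + 1)) (tB b (2 * l)) =
          ((k + l).choose k : ℂ) • tB b (2 * k + 2 * l + 1)) ∧
      (∀ k l : ℕ, 1 ≤ k → 1 ≤ l →
        S.mul (tB b (2 * k)) (tB b (2 * l)) =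
          ((k + l - 1).choose l : ℂ) • tB b (2 * k + 2 * l)) ∧
      (∀ k l : ℕ,
        S.mul (tB b (2 * k + 1)) (tB b (2 * l + 1)) =
          ((k + l).choose l : ℂ) • tB b (2 * k + 2 * l + 2)) ∧
      (∀ k l : ℕ, 1 ≤ k →
        S.mul (tB b (2 * k)) (tB b (2 * l + 1)) = 0)) ∧
    (∀ (Z' : Type v) [AddCommGroup Z'] [Module ℂ Z'] [FiniteDimensional ℂ Z']
        (S' : ZinbielSuper ℂ Z'),
      NullFiliform S' → S'.Z1 ≠ ⊥ →
      finrank ℂ S'.Z0 = finrank ℂ S.Z0 → finrank ℂ S'.Z1 = finrank ℂ S.Z1 →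
      ∃ φ : Z ≃ₗ[ℂ] Z',
        S.Z0.map (φ : Z →ₗ[ℂ] Z') = S'.Z0 ∧
        S.Z1.map (φ : Z →ₗ[ℂ] Z') = S'.Z1 ∧
        ∀ x y : Z, φ (S.mul x y) = S'.mul (φ x) (φ y)) := by
  obtain ⟨b, ho, he, hm, s0, s1⟩ := NF.main S hnf h1 _ rfl
  obtain ⟨d0, d1⟩ := NF.dims S _ b ho he
  refine ⟨by omega, ⟨b, ho, he, ?_, ?_, ?_, ?_⟩, ?_⟩
  · intro k l hl
    rw [hm _ _ (by omega) (by omega), NF.cc_oe, show 2 * k + 1 + 2 * l = 2 * k + 2 * l + 1 by ring]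
  · intro k l hk hl
    rw [hm _ _ (by omega) (by omega), NF.cc_ee]
  · intro k l
    rw [hm _ _ (by omega) (by omega), NF.cc_oo,
      show 2 * k + 1 + (2 * l + 1) = 2 * k + 2 * l + 2 by ring,
      Nat.choose_symm_of_eq_add (n := k + l) (a := k) (b := l) rfl]
  · intro k l hk
    rw [hm _ _ (by omega) (by omega), NF.cc_eo, Nat.cast_zero, zero_smul]
  · intro Z' _ _ _ S' hnf' h1' e0 e1
    have a := Submodule.finrank_add_eq_of_isCompl S.compl
    have a' := Submodule.finrank_add_eq_of_isCompl S'.compl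
    obtain ⟨b', ho', he', hm', s0', s1'⟩ := NF.main S' hnf' h1' (finrank ℂ Z) (by omega)
    let φ : Z ≃ₗ[ℂ] Z' := b.equiv b' (Equiv.refl _)
    have hφb : ∀ i, φ (b i) = b' i := fun i => by simp [φ]
    have hφ : ∀ t, φ (tB b t) = tB b' t := by
      intro t
      by_cases h : 1 ≤ t ∧ t ≤ finrank ℂ Z
      · simp only [tB, h, and_self, dif_pos, hφb]
      · simp only [tB, h, dif_neg, not_false_eq_true, map_zero]
    refine ⟨φ, ?_, ?_, ?_⟩
    · rw [← s0, ← s0', Submodule.map_span, ← Set.image_comp]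
      congr 1
      exact Set.image_congr fun t _ => hφ t
    · rw [← s1, ← s1', Submodule.map_span, ← Set.image_comp]
      congr 1
      exact Set.image_congr fun t _ => hφ t
    · have key : S.mul.compr₂ (φ : Z →ₗ[ℂ] Z') =
          S'.mul.compl₁₂ (φ : Z →ₗ[ℂ] Z') (φ : Z →ₗ[ℂ] Z') := by
        refine b.ext fun i => b.ext fun j => ?_
        simp only [LinearMap.compr₂_apply, LinearMap.compl₁₂_apply, LinearEquiv.coe_coe]
        rw [← NF.tB_succ b i, ← NF.tB_succ b j, hm _ _ (by omega) (by omega), map_smul, hφ, hφ,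
          hφ, hm' _ _ (by omega) (by omega)]
      intro x y
      exact LinearMap.congr_fun₂ key x y
end

section
/- If Z = Z₀ ⊕ Z₁ is an n-dimensional null-filiform Zinbiel superalgebra over ℂ with Z₁ ≠ 0, then Z is generated by a single odd element: there exists f ∈ Z₁ such that the smallest linear subspace of Z containing f and closed under the multiplication of Z is Z itself. -/
open Module Submodule

variable {K : Type*} [Field K] {Z : Type*} [AddCommGroup Z] [Module K Z]

theorem lcs_mul_mem (S : ZinbielSuper K Z) (k : ℕ) (a b : Z) (hb : b ∈ lcs S (k+1)) :
    S.mul a b ∈ lcs S (k+2) :=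
  Submodule.subset_span ⟨a, Submodule.mem_top, b, hb, rfl⟩

theorem exists_parts (S : ZinbielSuper K Z) (a : Z) :
    ∃ a0 ∈ S.Z0, ∃ a1 ∈ S.Z1, a0 + a1 = a := by
  have h : a ∈ S.Z0 ⊔ S.Z1 := by rw [S.compl.sup_eq_top]; trivial
  exact Submodule.mem_sup.1 h

theorem lcs_graded (S : ZinbielSuper K Z) (k : ℕ) :
    lcs S (k+1) ≤ (lcs S (k+1) ⊓ S.Z0) ⊔ (lcs S (k+1) ⊓ S.Z1) := by
  induction k with
  | zero =>
    intro z _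
    obtain ⟨a0, h0, a1, h1, rfl⟩ := exists_parts S z
    exact Submodule.add_mem_sup ⟨by simp [lcs], h0⟩ ⟨by simp [lcs], h1⟩
  | succ k ih =>
    refine Submodule.span_le.2 ?_
    rintro z ⟨a, -, b, hb, rfl⟩
    obtain ⟨a0, h0, a1, h1, rfl⟩ := exists_parts S a
    obtain ⟨b0, hb0, b1, hb1, rfl⟩ := Submodule.mem_sup.1 (ih hb)
    have e : S.mul (a0 + a1) (b0 + b1) = (S.mul a0 b0 + S.mul a1 b1)
        + (S.mul a0 b1 + S.mul a1 b0) := by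
      simp only [map_add, LinearMap.add_apply]; abel
    rw [e]
    exact Submodule.add_mem_sup
      ⟨add_mem (lcs_mul_mem S k _ _ hb0.1) (lcs_mul_mem S k _ _ hb1.1),
        add_mem (S.mul00 _ h0 _ hb0.2) (S.mul11 _ h1 _ hb1.2)⟩
      ⟨add_mem (lcs_mul_mem S k _ _ hb1.1) (lcs_mul_mem S k _ _ hb0.1),
        add_mem (S.mul01 _ h0 _ hb1.2) (S.mul10 _ h1 _ hb0.2)⟩

theorem lcs_mul_right (S : ZinbielSuper K Z) (k : ℕ) :
    ∀ u ∈ lcs S (k+1), ∀ c, S.mul u c ∈ lcs S (k+2) := by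
  induction k with
  | zero => intro u _ c; exact lcs_mul_mem S 0 u c (by simp [lcs])
  | succ k ih =>
    intro u hu c
    have key : ∀ a b c : Z, (a ∈ S.Z0 ∨ a ∈ S.Z1) → (b ∈ S.Z0 ∨ b ∈ S.Z1) →
        (c ∈ S.Z0 ∨ c ∈ S.Z1) → b ∈ lcs S (k+1) →
        S.mul (S.mul a b) c ∈ lcs S (k+1+2) := by
      intro a b c ha hb hc hbk
      have m1 := ih b hbk c
      have m2 := lcs_mul_mem S k c b hbk
      by_cases h : b ∈ S.Z0 ∨ c ∈ S.Z0
      · rw [S.zinb_even a b c ha hb hc h]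
        exact lcs_mul_mem S (k+1) _ _ (add_mem m1 m2)
      · rw [S.zinb_odd a b c ha (by tauto) (by tauto)]
        exact lcs_mul_mem S (k+1) _ _ (sub_mem m1 m2)
    have hle : lcs S (k+2) ≤ (lcs S (k+1+2)).comap (S.mul.flip c) := by
      refine Submodule.span_le.2 ?_
      rintro z ⟨a, -, b, hb, rfl⟩
      obtain ⟨a0, h0, a1, h1, rfl⟩ := exists_parts S a
      obtain ⟨c0, hc0, c1, hc1, rfl⟩ := exists_parts S c
      obtain ⟨b0, hb0, b1, hb1, rfl⟩ := Submodule.mem_sup.1 (lcs_graded S k hb)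
      simp only [SetLike.mem_coe, Submodule.mem_comap, LinearMap.flip_apply, map_add,
        LinearMap.add_apply]
      repeat' apply add_mem
      all_goals
        apply key
        · first | exact Or.inl h0 | exact Or.inr h1
        · first | exact Or.inl hb0.2 | exact Or.inr hb1.2
        · first | exact Or.inl hc0 | exact Or.inr hc1
        · first | exact hb0.1 | exact hb1.1
    exact hle hu

theorem generates (S : ZinbielSuper K Z) [FiniteDimensional K Z] (hnf : NullFiliform S)
    (f : Z) (hf : f ∉ lcs S 2) (P : Submodule K Z) (hfP : f ∈ P)
    (hP : ∀ a ∈ P, ∀ b ∈ P, S.mul a b ∈ P) : P = ⊤ := by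
  have hn : 0 < finrank K Z := by
    rw [Module.finrank_pos_iff_exists_ne_zero]
    exact ⟨f, fun h => hf (h ▸ zero_mem _)⟩
  have h2 := hnf 2 (by omega) (by omega)
  have hlt : lcs S 2 < P ⊔ lcs S 2 :=
    lt_of_le_of_ne le_sup_right fun h => hf (h ▸ Submodule.mem_sup_left hfP)
  have htop : P ⊔ lcs S 2 = ⊤ := by
    apply Submodule.eq_top_of_finrank_eq
    have := Submodule.finrank_lt_finrank_of_lt hlt
    have := Submodule.finrank_le (P ⊔ lcs S 2)
    omega
  have main : ∀ k, P ⊔ lcs S (k+1) = ⊤ := by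
    intro k
    induction k with
    | zero => simp [lcs]
    | succ k ih =>
      rw [eq_top_iff, ← htop]
      refine sup_le le_sup_left (Submodule.span_le.2 ?_)
      rintro z ⟨a, -, b, -, rfl⟩
      obtain ⟨p, hp, u, hu, rfl⟩ := Submodule.mem_sup.1 (ih ▸ Submodule.mem_top (x := a))
      obtain ⟨q, hq, v, hv, rfl⟩ := Submodule.mem_sup.1 (ih ▸ Submodule.mem_top (x := b))
      have e : S.mul (p + u) (q + v) = S.mul p q + (S.mul p v + S.mul u (q + v)) := by
        simp only [map_add, LinearMap.add_apply]; abel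
      rw [e]
      exact Submodule.add_mem_sup (hP _ hp _ hq)
        (add_mem (lcs_mul_mem S k _ _ hv) (lcs_mul_right S k _ hu _))
  have hl := hnf (finrank K Z + 1) (by omega) le_rfl
  rw [Nat.sub_self, Submodule.finrank_eq_zero] at hl
  have := main (finrank K Z)
  rwa [hl, sup_bot_eq] at this

/-- A null-filiform Zinbiel superalgebra over `ℂ` with nonzero odd part
is generated by a single odd element. -/
theorem nullFiliform_single_odd_generator
    {Z : Type*} [AddCommGroup Z] [Module ℂ Z] [FiniteDimensional ℂ Z]
    (S : ZinbielSuper ℂ Z) (hnf : NullFiliform S) (h1 : S.Z1 ≠ ⊥) :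
    ∃ f ∈ S.Z1, ∀ P : Submodule ℂ Z,
      f ∈ P → (∀ a ∈ P, ∀ b ∈ P, S.mul a b ∈ P) → P = ⊤ := by
  by_cases h : S.Z1 ≤ lcs S 2
  · exfalso
    have hn : 0 < finrank ℂ Z := by
      obtain ⟨x, -, hx⟩ := Submodule.exists_mem_ne_zero_of_ne_bot h1
      exact Module.finrank_pos_iff_exists_ne_zero.2 ⟨x, hx⟩
    have h2 := hnf 2 (by omega) (by omega)
    have h0 : ¬ S.Z0 ≤ lcs S 2 := by
      intro h0
      have : lcs S 2 = ⊤ := by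
        rw [eq_top_iff, ← S.compl.sup_eq_top]; exact sup_le h0 h
      rw [this, finrank_top] at h2
      omega
    obtain ⟨e, he, he2⟩ := SetLike.not_le_iff_exists.1 h0
    have ht := generates S hnf e he2 S.Z0 he S.mul00
    have hd := S.compl.inf_eq_bot
    rw [ht, top_inf_eq] at hd
    exact h1 hd
  · obtain ⟨f, hf, hf2⟩ := SetLike.not_le_iff_exists.1 h
    exact ⟨f, hf, fun P hfP hP => generates S hnf f hf2 P hfP hP⟩
end

section
/- Let Z = Z₀ ⊕ Z₁ be a finite-dimensional Zinbiel superalgebra over a field with dim Z₁ = 1. Then Z₀·Z₁ = Z₁·Z₀ = 0, and Z₁·Z₁ is contained in the left annihilator of Z₀, i.e. (u·v)·x = 0 for all u, v ∈ Z₁ and all x ∈ Z₀. -/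
open Module Submodule

variable {K : Type*} [Field K] {Z : Type*} [AddCommGroup Z] [Module K Z]

/-- In a finite-dimensional Zinbiel superalgebra with `dim Z₁ = 1` one has
`Z₀·Z₁ = Z₁·Z₀ = 0`, and `Z₁·Z₁` lies in the left annihilator of `Z₀`. -/
theorem dimOne_oddPart (K : Type*) [Field K] (Z : Type*) [AddCommGroup Z]
    [Module K Z] [FiniteDimensional K Z] (S : ZinbielSuper K Z)
    (h1 : finrank K S.Z1 = 1) :
    (∀ x ∈ S.Z0, ∀ u ∈ S.Z1, S.mul x u = 0) ∧
    (∀ u ∈ S.Z1, ∀ x ∈ S.Z0, S.mul u x = 0) ∧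
    (∀ u ∈ S.Z1, ∀ v ∈ S.Z1, ∀ x ∈ S.Z0, S.mul (S.mul u v) x = 0) := by
  obtain ⟨egen, hgen0, hgenspan⟩ := finrank_eq_one_iff'.mp h1
  obtain ⟨e, he⟩ := egen
  have he0 : e ≠ 0 := fun h => hgen0 (Subtype.ext h)
  have hspan : ∀ w ∈ S.Z1, ∃ c : K, w = c • e := by
    intro w hw
    obtain ⟨c, hc⟩ := hgenspan ⟨w, hw⟩
    exact ⟨c, (congrArg Subtype.val hc).symm⟩
  have hleft : ∀ x ∈ S.Z0, S.mul x e = 0 := by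
    intro x hx
    obtain ⟨a, ha⟩ := hspan _ (S.mul01 x hx e he)
    obtain ⟨b, hb⟩ := hspan _ (S.mul10 e he x hx)
    have h := S.zinb_even x e x (Or.inl hx) (Or.inr he) (Or.inl hx) (Or.inr hx)
    simp only [map_add, ha, hb, map_smul, LinearMap.smul_apply] at h
    have h2 : (a * a) • e = 0 := by
      rw [smul_smul, smul_smul, smul_smul, mul_comm b a] at h
      simpa using h.symm
    have h3 : a = 0 := by simpa [he0] using h2
    rw [ha, h3, zero_smul]
  have hassoc : ∀ a ∈ S.Z0, ∀ b ∈ S.Z0, ∀ c ∈ S.Z0,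
      S.mul (S.mul a b) c = S.mul a (S.mul b c + S.mul c b) := fun a ha b hb c hc =>
    S.zinb_even a b c (Or.inl ha) (Or.inl hb) (Or.inl hc) (Or.inl hb)
  have hright : ∀ x ∈ S.Z0, S.mul e x = 0 := by
    by_contra! hne
    obtain ⟨x0, hx0, hex0⟩ := hne
    let P : Set (Submodule K Z) := {V | V ≤ S.Z0 ∧
      (∀ a ∈ V, ∀ b ∈ V, S.mul a b + S.mul b a ∈ V) ∧ ∃ x ∈ V, S.mul e x ≠ 0}
    have hP : P.Nonempty := ⟨S.Z0, le_rfl,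
      fun a ha b hb => add_mem (S.mul00 a ha b hb) (S.mul00 b hb a ha), x0, hx0, hex0⟩
    obtain ⟨V, ⟨hV0, hVm, x, hx, hex⟩, hmin⟩ :=
      (wellFounded_lt (α := Submodule K Z)).has_min P hP
    let T : Z →ₗ[K] Z := S.mul x + S.mul.flip x
    have hT : ∀ y, T y = S.mul x y + S.mul y x := fun y => rfl
    have tri : ∀ a ∈ V, ∀ b ∈ V, ∀ c ∈ V,
        S.mul (S.mul a b + S.mul b a) c + S.mul c (S.mul a b + S.mul b a) =
        S.mul a (S.mul b c + S.mul c b) + S.mul b (S.mul a c + S.mul c a)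
          + S.mul c (S.mul a b + S.mul b a) := by
      intro a ha b hb c hc
      rw [map_add S.mul, LinearMap.add_apply, hassoc a (hV0 ha) b (hV0 hb) c (hV0 hc),
        hassoc b (hV0 hb) a (hV0 ha) c (hV0 hc)]
    -- `(x * v) * w = x * (v * w)`
    have hTm : ∀ v ∈ V, ∀ w ∈ V, S.mul (T v) w + S.mul w (T v) =
        T (S.mul v w + S.mul w v) := by
      intro v hv w hw
      have h1 := tri x hx v hv w hw
      have h2 := tri v hv w hw x hx
      rw [hT, hT, h1, add_comm (S.mul x _) (S.mul (_ + _) x), h2,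
        add_comm (S.mul w x), add_comm (S.mul v x)]
      abel
    have hTV : V.map T ≤ V := by
      rintro _ ⟨v, hv, rfl⟩
      exact hVm x hx v hv
    have hTP : V.map T ∈ P := by
      refine ⟨hTV.trans hV0, ?_, T x, ⟨x, hx, rfl⟩, ?_⟩
      · rintro _ ⟨v, hv, rfl⟩ b hb
        rw [hTm v hv b (hTV hb)]
        exact ⟨_, hVm v hv b (hTV hb), rfl⟩
      · obtain ⟨c, hc⟩ := hspan _ (S.mul10 e he x (hV0 hx))
        have h := S.zinb_even e x x (Or.inr he) (Or.inl (hV0 hx)) (Or.inl (hV0 hx))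
          (Or.inl (hV0 hx))
        rw [hT, ← h, hc, map_smul, LinearMap.smul_apply]
        refine smul_ne_zero ?_ hex
        rintro rfl
        exact hex (by rw [hc, zero_smul])
    have hEq : V.map T = V := by
      by_contra hn
      exact hmin _ hTP (lt_of_le_of_ne hTV hn)
    have hxm : x ∈ V.map T := by rw [hEq]; exact hx
    obtain ⟨f, hf, hxf⟩ := hxm
    have hfm : f ∈ V.map T := by rw [hEq]; exact hf
    obtain ⟨v, hv, hvf⟩ := hfm
    -- `f` is idempotent
    have hff : S.mul f f + S.mul f f = f := by
      have h1 := hTm v hv f hf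
      have h2 := hTm f hf v hv
      rw [hvf, add_comm (S.mul v f), ← h2, hxf, ← hT, hvf] at h1
      exact h1
    have h3 := hassoc f (hV0 hf) f (hV0 hf) f (hV0 hf)
    rw [hff] at h3
    have h4 : S.mul f f = S.mul f f + S.mul f f := by
      calc S.mul f f = S.mul (S.mul f f + S.mul f f) f := by rw [hff]
        _ = S.mul f f + S.mul f f := by rw [map_add S.mul, LinearMap.add_apply, h3]
    have hf0 : f = 0 := by
      have h5 : S.mul f f = 0 := by simpa using h4
      rw [← hff, h5, add_zero]
    apply hex
    rw [← hxf, hf0, map_zero, map_zero]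
  have hR : ∀ u ∈ S.Z1, ∀ x ∈ S.Z0, S.mul u x = 0 := by
    intro u hu x hx
    obtain ⟨c, rfl⟩ := hspan u hu
    rw [map_smul, LinearMap.smul_apply, hright x hx, smul_zero]
  have hL : ∀ x ∈ S.Z0, ∀ u ∈ S.Z1, S.mul x u = 0 := by
    intro x hx u hu
    obtain ⟨c, rfl⟩ := hspan u hu
    rw [map_smul, hleft x hx, smul_zero]
  refine ⟨hL, hR, ?_⟩
  intro u hu v hv x hx
  rw [S.zinb_even u v x (Or.inr hu) (Or.inr hv) (Or.inl hx) (Or.inr hx), hR v hv x hx,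
    hL x hx v hv, add_zero, map_zero]
end

section
/- Let Z₀ be a Zinbiel algebra over a field K, i.e. a K-vector space with bilinear multiplication satisfying (x·y)·z = x·(y·z + z·y), and let c ∈ Z₀ satisfy c·Z₀ = 0. Define Z = Z₀ ⊕ K·f₁ with multiplication extending that of Z₀ by x·f₁ = f₁·x = 0 for all x ∈ Z₀, and f₁·f₁ = c. Then Z, with even part Z₀ and odd part K·f₁, is a Zinbiel superalgebra. -/
open Module Submodule

variable {K : Type*} [Field K] {Z : Type*} [AddCommGroup Z] [Module K Z]

/-- Given a Zinbiel algebra `A` and `c ∈ A` with `c·A = 0`, the space `Z = A ⊕ K·f₁` with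
`x·f₁ = f₁·x = 0` for `x ∈ A` and `f₁·f₁ = c`, with even part `A` and odd part `K·f₁`,
is a Zinbiel superalgebra. -/
theorem zinbiel_oneDim_odd_extension (K : Type*) [Field K] (A : Type*) [AddCommGroup A]
    [Module K A] (mulA : A →ₗ[K] A →ₗ[K] A)
    (hzinb : ∀ x y z : A, mulA (mulA x y) z = mulA x (mulA y z + mulA z y))
    (c : A) (hc : ∀ x : A, mulA c x = 0) :
    ∃ S : ZinbielSuper K (A × K),
      S.Z0 = LinearMap.range (LinearMap.inl K A K) ∧
      S.Z1 = LinearMap.range (LinearMap.inr K A K) ∧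
      ∀ (x y : A) (s t : K),
        S.mul (x, s) (y, t) = (mulA x y + (s * t) • c, 0) := by
  let m : (A × K) →ₗ[K] (A × K) →ₗ[K] (A × K) :=
    LinearMap.mk₂ K (fun p q => (mulA p.1 q.1 + (p.2 * q.2) • c, 0))
      (by intro p p' q; ext <;> simp [add_mul, add_smul]; abel)
      (by intro k p q; ext <;> simp [mul_smul])
      (by intro p q q'; ext <;> simp [mul_add, add_smul]; abel)
      (by intro k p q; ext <;> simp [mul_left_comm p.2 k, mul_smul k])
  have hm : ∀ p q, m p q = (mulA p.1 q.1 + (p.2 * q.2) • c, 0) := fun p q => rfl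
  have h0 : ∀ p : A × K, p ∈ LinearMap.range (LinearMap.inl K A K) ↔ p.2 = 0 := by
    rintro ⟨a, k⟩
    simp [eq_comm]
  have h1 : ∀ p : A × K, p ∈ LinearMap.range (LinearMap.inr K A K) ↔ p.1 = 0 := by
    rintro ⟨a, k⟩
    simp [eq_comm]
  refine ⟨{ mul := m
            Z0 := LinearMap.range (LinearMap.inl K A K)
            Z1 := LinearMap.range (LinearMap.inr K A K)
            compl := LinearMap.isCompl_range_inl_inr
            mul00 := ?_
            mul01 := ?_
            mul10 := ?_
            mul11 := ?_
            zinb_even := ?_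
            zinb_odd := ?_ }, rfl, rfl, fun x y s t => rfl⟩
  · intro x hx y hy
    simp [h0, hm]
  · intro x hx y hy
    rw [h0] at hx
    rw [h1] at hy ⊢
    simp [hm, hx, hy]
  · intro x hx y hy
    rw [h1] at hx ⊢
    rw [h0] at hy
    simp [hm, hx, hy]
  · intro x hx y hy
    simp [h0, hm]
  · rintro ⟨x, r⟩ ⟨y, s⟩ ⟨z, t⟩ hx hy hz hyz
    simp only [h0, h1] at hx hy hz hyz
    have hst : s * t = 0 := by rcases hyz with h | h <;> simp [h]
    have hts : t * s = 0 := by rw [mul_comm, hst]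
    simp [hm, hst, hts, hc, hzinb]
  · rintro ⟨x, r⟩ ⟨y, s⟩ ⟨z, t⟩ hx hy hz
    simp only [h0, h1] at hx hy hz
    subst hy hz
    simp [hm, mul_comm t s]
end

section
/- Every Zinbiel superalgebra Z = Z₀ ⊕ Z₁ over a field with finite dimension n > 1 has a proper graded ideal: there exists an ideal I of Z with I ≠ 0, I ≠ Z, and I = (I ∩ Z₀) ⊕ (I ∩ Z₁). -/
open Module Submodule

variable {K : Type*} [Field K] {Z : Type*} [AddCommGroup Z] [Module K Z]

/-- `I` is a (two-sided) ideal of the Zinbiel superalgebra: `Z·I ⊆ I` and `I·Z ⊆ I`. -/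
def IsIdeal (S : ZinbielSuper K Z) (I : Submodule K Z) : Prop :=
  ∀ x : Z, ∀ a ∈ I, S.mul x a ∈ I ∧ S.mul a x ∈ I

/-- `I` is a right ideal of the Zinbiel superalgebra: `I·Z ⊆ I`. -/
def IsRightIdeal (S : ZinbielSuper K Z) (I : Submodule K Z) : Prop :=
  ∀ a ∈ I, ∀ x : Z, S.mul a x ∈ I

/-- `I` is a minimal ideal: it is a nonzero ideal and the only ideals contained in it
are `0` and itself. -/
def IsMinimalIdeal (S : ZinbielSuper K Z) (I : Submodule K Z) : Prop :=
  IsIdeal S I ∧ I ≠ ⊥ ∧ ∀ J : Submodule K Z, IsIdeal S J → J ≤ I → J = ⊥ ∨ J = I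

/-- `I` is a minimal right ideal: it is a nonzero right ideal and the only right ideals
contained in it are `0` and itself. -/
def IsMinimalRightIdeal (S : ZinbielSuper K Z) (I : Submodule K Z) : Prop :=
  IsRightIdeal S I ∧ I ≠ ⊥ ∧ ∀ J : Submodule K Z, IsRightIdeal S J → J ≤ I → J = ⊥ ∨ J = I


theorem zs_decomp {K : Type*} [Field K] {Z : Type*} [AddCommGroup Z] [Module K Z]
    (S : ZinbielSuper K Z) (x : Z) : ∃ a ∈ S.Z0, ∃ b ∈ S.Z1, a + b = x := by
  have h : x ∈ S.Z0 ⊔ S.Z1 := by rw [S.compl.sup_eq_top]; trivial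
  exact Submodule.mem_sup.1 h

theorem zs_even {K : Type*} [Field K] {Z : Type*} [AddCommGroup Z] [Module K Z]
    (S : ZinbielSuper K Z) (x y z : Z) (hy : y ∈ S.Z0) (hz : z ∈ S.Z0 ∨ z ∈ S.Z1) :
    S.mul (S.mul x y) z = S.mul x (S.mul y z + S.mul z y) := by
  obtain ⟨a, ha, b, hb, rfl⟩ := zs_decomp S x
  have h1 := S.zinb_even a y z (Or.inl ha) (Or.inl hy) hz (Or.inl hy)
  have h2 := S.zinb_even b y z (Or.inr hb) (Or.inl hy) hz (Or.inl hy)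
  rw [map_add, LinearMap.add_apply, LinearMap.add_apply, map_add, LinearMap.add_apply, h1, h2]

theorem zs_even' {K : Type*} [Field K] {Z : Type*} [AddCommGroup Z] [Module K Z]
    (S : ZinbielSuper K Z) (x y z : Z) (hy : y ∈ S.Z1) (hz : z ∈ S.Z0) :
    S.mul (S.mul x y) z = S.mul x (S.mul y z + S.mul z y) := by
  obtain ⟨a, ha, b, hb, rfl⟩ := zs_decomp S x
  have h1 := S.zinb_even a y z (Or.inl ha) (Or.inr hy) (Or.inl hz) (Or.inr hz)
  have h2 := S.zinb_even b y z (Or.inr hb) (Or.inr hy) (Or.inl hz) (Or.inr hz)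
  rw [map_add, LinearMap.add_apply, LinearMap.add_apply, map_add, LinearMap.add_apply, h1, h2]

theorem zs_odd {K : Type*} [Field K] {Z : Type*} [AddCommGroup Z] [Module K Z]
    (S : ZinbielSuper K Z) (x y z : Z) (hy : y ∈ S.Z1) (hz : z ∈ S.Z1) :
    S.mul (S.mul x y) z = S.mul x (S.mul y z - S.mul z y) := by
  obtain ⟨a, ha, b, hb, rfl⟩ := zs_decomp S x
  have h1 := S.zinb_odd a y z (Or.inl ha) hy hz
  have h2 := S.zinb_odd b y z (Or.inr hb) hy hz
  rw [map_add, LinearMap.add_apply, LinearMap.add_apply, map_add, LinearMap.add_apply, h1, h2]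

theorem zs_mem {K : Type*} [Field K] {Z : Type*} [AddCommGroup Z] [Module K Z]
    (S : ZinbielSuper K Z) (A B : Submodule K Z) {a b : Z} (ha : a ∈ A) (hb : b ∈ B) :
    S.mul a b ∈ mulSub S.mul A B := Submodule.subset_span ⟨a, ha, b, hb, rfl⟩

/-- If `Z·Z = Z` then `Z·Z₀ = Z`. -/
theorem zs_top {K : Type*} [Field K] {Z : Type*} [AddCommGroup Z] [Module K Z]
    (S : ZinbielSuper K Z) (h : mulSub S.mul ⊤ ⊤ = ⊤) : mulSub S.mul ⊤ S.Z0 = ⊤ := by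
  have key : ∀ b ∈ S.Z1, ∀ a : Z, S.mul a b ∈ mulSub S.mul ⊤ S.Z0 := by
    intro b hb a
    have ha : a ∈ mulSub S.mul ⊤ ⊤ := by rw [h]; trivial
    unfold mulSub at ha
    induction ha using Submodule.span_induction with
    | mem x hx =>
      obtain ⟨c, -, d, -, rfl⟩ := hx
      obtain ⟨d0, h0, d1, h1, rfl⟩ := zs_decomp S d
      rw [map_add, map_add, LinearMap.add_apply]
      refine add_mem ?_ ?_
      · rw [zs_even S c d0 b h0 (Or.inr hb), add_comm, ← zs_even' S c b d0 hb h0]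
        exact zs_mem S _ _ trivial h0
      · rw [zs_odd S c d1 b h1 hb]
        exact zs_mem S _ _ trivial (sub_mem (S.mul11 _ h1 _ hb) (S.mul11 _ hb _ h1))
    | zero => simp
    | add x y _ _ hx hy => rw [map_add, LinearMap.add_apply]; exact add_mem hx hy
    | smul r x _ hx => rw [map_smul, LinearMap.smul_apply]; exact Submodule.smul_mem _ _ hx
  rw [eq_top_iff]
  refine h.ge.trans (Submodule.span_le.2 ?_)
  rintro _ ⟨a, -, b, -, rfl⟩
  obtain ⟨b0, h0, b1, h1, rfl⟩ := zs_decomp S b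
  rw [map_add]
  exact add_mem (zs_mem S _ _ trivial h0) (key _ h1 _)

theorem zs_abs {K : Type*} [Field K] {Z : Type*} [AddCommGroup Z] [Module K Z]
    [FiniteDimensional K Z] {B : Type*} [CommRing B] [Algebra K B] [Module B Z]
    [IsScalarTower K B Z] (I : Ideal B)
    (h : ∀ N : Submodule K Z, (∀ r ∈ I, ∀ a : Z, r • a ∈ N) → N = ⊤) :
    ∃ r ∈ I, ∀ x : Z, r • x = x := by
  have : Module.Finite B Z := Module.Finite.of_restrictScalars_finite K B Z
  have h1 := h ((I • (⊤ : Submodule B Z)).restrictScalars K)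
    (by
      intro r hr a
      rw [Submodule.restrictScalars_mem]
      have ha : a ∈ (⊤ : Submodule B Z) := Submodule.mem_top
      exact Submodule.smul_mem_smul hr ha)
  obtain ⟨r, hr, hrx⟩ := Submodule.exists_mem_and_smul_eq_self_of_fg_of_le_smul I
    (⊤ : Submodule B Z) Module.Finite.fg_top (by
      intro x _
      have hx : x ∈ (I • (⊤ : Submodule B Z)).restrictScalars K := by rw [h1]; exact Submodule.mem_top
      rwa [Submodule.restrictScalars_mem] at hx)
  exact ⟨r, hr, fun x => hrx x Submodule.mem_top⟩

theorem zs_abs' {K : Type*} [Field K] {Z : Type*} [AddCommGroup Z] [Module K Z]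
    [FiniteDimensional K Z] {B : Type*} [iB : Ring B] [Algebra K B] [Module B Z]
    [IsScalarTower K B Z] (hc : ∀ a b : B, a * b = b * a) (I : Ideal B)
    (h : ∀ N : Submodule K Z, (∀ r ∈ I, ∀ a : Z, r • a ∈ N) → N = ⊤) :
    ∃ r ∈ I, ∀ x : Z, r • x = x := by
  let iC : CommRing B := { iB with mul_comm := hc }
  exact zs_abs (K := K) (Z := Z) (B := B) I h

/-- Determinant trick for a commutative (non-unital) algebra `T` of operators. -/
theorem zs_ops {K : Type*} [Field K] {Z : Type*} [AddCommGroup Z] [Module K Z]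
    [FiniteDimensional K Z] (T : Submodule K (Module.End K Z))
    (hcomm : ∀ a ∈ (T : Set (Module.End K Z)), ∀ b ∈ (T : Set (Module.End K Z)), a * b = b * a)
    (hmul : ∀ a ∈ T, ∀ b ∈ T, a * b ∈ T)
    (h : ∀ N : Submodule K Z, (∀ f ∈ T, ∀ a : Z, f a ∈ N) → N = ⊤) :
    ∃ f ∈ T, ∀ x : Z, f x = x := by
  have hs : ∀ f ∈ Algebra.adjoin K (T : Set (Module.End K Z)), ∀ g ∈ T, f * g ∈ T := by
    intro f hf
    induction hf using Algebra.adjoin_induction with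
    | mem f hf => exact hmul f hf
    | algebraMap r =>
      intro g hg
      rw [← Algebra.smul_def]
      exact T.smul_mem r hg
    | add f g _ _ hf hg =>
      intro k hk
      rw [add_mul]
      exact add_mem (hf k hk) (hg k hk)
    | mul f g _ _ hf hg =>
      intro k hk
      rw [mul_assoc]
      exact hf _ (hg _ hk)
  have : IsMulCommutative (Algebra.adjoin K (T : Set (Module.End K Z))) :=
    Algebra.isMulCommutative_adjoin K hcomm
  have hI : ∃ I : Ideal (Algebra.adjoin K (T : Set (Module.End K Z))),
      ∀ b, b ∈ I ↔ (b : Module.End K Z) ∈ T :=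
    ⟨{ carrier := {b | (b : Module.End K Z) ∈ T}
       add_mem' := fun ha hb => T.add_mem ha hb
       zero_mem' := zero_mem T
       smul_mem' := fun c x hx => hs _ c.2 _ hx }, fun b => Iff.rfl⟩
  obtain ⟨I, hI⟩ := hI
  have hNx : ∀ N : Submodule K Z, (∀ r ∈ I, ∀ a : Z, r • a ∈ N) → N = ⊤ := by
    intro N hN
    refine h N (fun f hf a => ?_)
    have hfI : (⟨f, Algebra.subset_adjoin hf⟩ :
      Algebra.adjoin K (T : Set (Module.End K Z))) ∈ I := (hI _).2 hf
    exact hN _ hfI a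
  obtain ⟨r, hr, hrx⟩ := zs_abs' (K := K) (Z := Z)
    (B := Algebra.adjoin K (T : Set (Module.End K Z))) (fun a b => mul_comm' a b) I hNx
  exact ⟨r, (hI r).1 hr, hrx⟩

/-- If `Z·Z₀ = Z`, some even `e` acts as a right identity. -/
theorem zs_unit {K : Type*} [Field K] {Z : Type*} [AddCommGroup Z] [Module K Z]
    [FiniteDimensional K Z]
    (S : ZinbielSuper K Z) (h : mulSub S.mul ⊤ S.Z0 = ⊤) :
    ∃ e ∈ S.Z0, ∀ x, S.mul x e = x := by
  have hmul : ∀ y ∈ S.Z0, ∀ z ∈ S.Z0,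
      (S.mul.flip z : Module.End K Z) * S.mul.flip y = S.mul.flip (S.mul y z + S.mul z y) := by
    intro y hy z hz
    ext x
    exact zs_even S x y z hy (Or.inl hz)
  obtain ⟨f, ⟨e, he, rfl⟩, hf⟩ := zs_ops (S.Z0.map S.mul.flip) (by
      rintro _ ⟨y, hy, rfl⟩ _ ⟨z, hz, rfl⟩
      rw [hmul z hz y hy, hmul y hy z hz, add_comm]) (by
      rintro _ ⟨z, hz, rfl⟩ _ ⟨y, hy, rfl⟩
      rw [hmul y hy z hz]
      exact Submodule.mem_map_of_mem (add_mem (S.mul00 _ hy _ hz) (S.mul00 _ hz _ hy))) (by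
      intro N hN
      rw [eq_top_iff]
      refine h.ge.trans (Submodule.span_le.2 ?_)
      rintro _ ⟨a, -, b, hb, rfl⟩
      exact hN (S.mul.flip b) (Submodule.mem_map_of_mem hb) a)
  exact ⟨e, he, hf⟩

theorem zs_ne_top {K : Type*} [Field K] {Z : Type*} [AddCommGroup Z] [Module K Z]
    [FiniteDimensional K Z] [Nontrivial Z]
    (S : ZinbielSuper K Z) : mulSub S.mul ⊤ ⊤ ≠ ⊤ := by
  intro h
  obtain ⟨e, he, h1⟩ := zs_unit S (zs_top S h)
  have h2 := zs_even S e e e he (Or.inl he)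
  rw [map_add, h1 e, h1 e] at h2
  have h3 : e = 0 := by simpa using h2
  obtain ⟨x, hx⟩ := exists_ne (0 : Z)
  apply hx
  rw [← h1 x, h3, map_zero]

/-- Every Zinbiel superalgebra of finite dimension `> 1` has a proper graded ideal. -/
theorem exists_proper_graded_ideal (K : Type*) [Field K] (Z : Type*) [AddCommGroup Z]
    [Module K Z] [FiniteDimensional K Z] (S : ZinbielSuper K Z)
    (hdim : 1 < finrank K Z) :
    ∃ I : Submodule K Z, IsIdeal S I ∧ I ≠ ⊥ ∧ I ≠ ⊤ ∧
      I = (I ⊓ S.Z0) ⊔ (I ⊓ S.Z1) := by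
  have : Nontrivial Z := Module.nontrivial_of_finrank_pos (R := K) (by omega)
  by_cases hb : mulSub S.mul ⊤ ⊤ = ⊥
  · have hz : ∀ a b, S.mul a b = 0 := by
      intro a b
      have := zs_mem S ⊤ ⊤ (a := a) (b := b) trivial trivial
      rwa [hb, Submodule.mem_bot] at this
    have hex : ∃ x : Z, x ≠ 0 ∧ (x ∈ S.Z0 ∨ x ∈ S.Z1) := by
      obtain ⟨x, hx⟩ := exists_ne (0 : Z)
      obtain ⟨a, ha, b, hb, rfl⟩ := zs_decomp S x
      by_cases h0 : a = 0
      · exact ⟨b, by simpa [h0] using hx, Or.inr hb⟩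
      · exact ⟨a, h0, Or.inl ha⟩
    obtain ⟨x, hx, hxx⟩ := hex
    refine ⟨Submodule.span K {x}, ?_, ?_, ?_, ?_⟩
    · intro y a _
      rw [hz, hz]
      exact ⟨zero_mem _, zero_mem _⟩
    · simpa [Submodule.span_singleton_eq_bot] using hx
    · intro h
      have h1 := finrank_span_singleton (K := K) hx
      rw [h, finrank_top] at h1
      omega
    · refine le_antisymm ?_ (sup_le inf_le_left inf_le_left)
      rcases hxx with hxx | hxx
      · exact le_sup_of_le_left (le_inf le_rfl (by simpa using hxx))
      · exact le_sup_of_le_right (le_inf le_rfl (by simpa using hxx))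
  · refine ⟨mulSub S.mul ⊤ ⊤, ?_, hb, zs_ne_top S, ?_⟩
    · intro x a _
      exact ⟨zs_mem S _ _ trivial trivial, zs_mem S _ _ trivial trivial⟩
    · refine le_antisymm ?_ (sup_le inf_le_left inf_le_left)
      refine Submodule.span_le.2 ?_
      rintro _ ⟨a, -, b, -, rfl⟩
      obtain ⟨a0, ha0, a1, ha1, rfl⟩ := zs_decomp S a
      obtain ⟨b0, hb0, b1, hb1, rfl⟩ := zs_decomp S b
      have hm : ∀ u v, S.mul u v ∈ mulSub S.mul ⊤ ⊤ := fun u v => zs_mem S _ _ trivial trivial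
      rw [map_add, map_add, LinearMap.add_apply, LinearMap.add_apply]
      refine add_mem (add_mem ?_ ?_) (add_mem ?_ ?_)
      · exact Submodule.mem_sup_left ⟨hm _ _, S.mul00 _ ha0 _ hb0⟩
      · exact Submodule.mem_sup_right ⟨hm _ _, S.mul10 _ ha1 _ hb0⟩
      · exact Submodule.mem_sup_right ⟨hm _ _, S.mul01 _ ha0 _ hb1⟩
      · exact Submodule.mem_sup_left ⟨hm _ _, S.mul11 _ ha1 _ hb1⟩
end

section
/- Let Z be a finite-dimensional Zinbiel superalgebra over a field, let I be a minimal ideal of Z, and let J be a minimal right ideal of Z such that J ⊆ I. Then I = J. -/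
open Module Submodule

variable {K : Type*} [Field K] {Z : Type*} [AddCommGroup Z] [Module K Z]

namespace ZinbielAux

section Lattice

variable {α : Type*} [Lattice α] [BoundedOrder α]

theorem mono_of_sup (f : α → α) (hf : ∀ a b, f (a ⊔ b) = f a ⊔ f b) : Monotone f := by
  intro a b hab
  have h := hf a b
  rw [sup_eq_right.mpr hab] at h
  rw [h]
  exact le_sup_left

theorem iterate_sup (f : α → α) (hf : ∀ a b, f (a ⊔ b) = f a ⊔ f b) (n : ℕ) (a b : α) :
    f^[n] (a ⊔ b) = f^[n] a ⊔ f^[n] b := by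
  induction n with
  | zero => rfl
  | succ n ih => simp only [Function.iterate_succ_apply', ih, hf]

theorem iterate_bot (f : α → α) (hf : f ⊥ = ⊥) (n : ℕ) : f^[n] ⊥ = ⊥ := by
  induction n with
  | zero => rfl
  | succ n ih => simp only [Function.iterate_succ_apply', ih, hf]

/-- Combining two nilpotent operators. -/
theorem nil_comb (f g b : α → α) (hf : ∀ x y, f (x ⊔ y) = f x ⊔ f y)
    (hg : ∀ x y, g (x ⊔ y) = g x ⊔ g y) (hf0 : f ⊥ = ⊥) (hg0 : g ⊥ = ⊥)
    (hb : ∀ x, b x = f x ⊔ g x) (n m : ℕ) (hfn : f^[n] ⊤ = ⊥) (hgm : g^[m] ⊤ = ⊥)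
    (hc : ∀ k i, ∃ j, f (g^[i] (f^[k] ⊤)) ≤ b^[j] (f^[k+1] ⊤)) :
    ∃ N, b^[N] ⊤ = ⊥ := by
  have hbs : ∀ x y, b (x ⊔ y) = b x ⊔ b y := by
    intro x y
    rw [hb, hb, hb, hf, hg, sup_sup_sup_comm]
  have hb0 : b ⊥ = ⊥ := by rw [hb, hf0, hg0, sup_idem]
  have bm : Monotone b := mono_of_sup b hbs
  have gm : Monotone g := mono_of_sup g hg
  have nil_le : ∀ x y, x ≤ y → (∃ N, b^[N] y = ⊥) → ∃ N, b^[N] x = ⊥ := by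
    rintro x y hxy ⟨N, hN⟩
    exact ⟨N, le_bot_iff.mp (hN ▸ bm.iterate N hxy)⟩
  have nil_sup : ∀ x y, (∃ N, b^[N] x = ⊥) → (∃ N, b^[N] y = ⊥) → ∃ N, b^[N] (x ⊔ y) = ⊥ := by
    rintro x y ⟨N, hN⟩ ⟨M, hM⟩
    refine ⟨N + M, ?_⟩
    rw [iterate_sup b hbs]
    have h1 : b^[N+M] x = ⊥ := by
      rw [add_comm, Function.iterate_add_apply, hN, iterate_bot b hb0]
    have h2 : b^[N+M] y = ⊥ := by
      rw [Function.iterate_add_apply, hM, iterate_bot b hb0]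
    rw [h1, h2, sup_idem]
  have nil_it : ∀ j x, (∃ N, b^[N] x = ⊥) → ∃ N, b^[N] (b^[j] x) = ⊥ := by
    rintro j x ⟨N, hN⟩
    refine ⟨N, ?_⟩
    rw [← Function.iterate_add_apply, add_comm, Function.iterate_add_apply, hN,
      iterate_bot b hb0]
  have key : ∀ k, (∃ N, b^[N] (f^[k+1] ⊤) = ⊥) → ∃ N, b^[N] (f^[k] ⊤) = ⊥ := by
    intro k hk
    have step : ∀ i, ∃ X, (∃ N, b^[N] X = ⊥) ∧ b^[i] (f^[k] ⊤) ≤ X ⊔ g^[i] (f^[k] ⊤) := by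
      intro i
      induction i with
      | zero => exact ⟨⊥, ⟨0, rfl⟩, by simp⟩
      | succ i ih =>
        obtain ⟨X, hX, hle⟩ := ih
        obtain ⟨j, hj⟩ := hc k i
        refine ⟨b X ⊔ b^[j] (f^[k+1] ⊤), nil_sup _ _ (nil_it 1 X hX) (nil_it j _ hk), ?_⟩
        rw [Function.iterate_succ_apply', Function.iterate_succ_apply' g]
        refine (bm hle).trans ?_
        rw [hbs, sup_assoc, hb (g^[i] _)]
        exact sup_le_sup le_rfl (sup_le_sup hj le_rfl)
    obtain ⟨X, hX, hle⟩ := step m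
    have h0 : g^[m] (f^[k] ⊤) = ⊥ := le_bot_iff.mp (hgm ▸ gm.iterate m le_top)
    rw [h0, sup_bot_eq] at hle
    obtain ⟨N, hN⟩ := nil_le _ _ hle hX
    exact ⟨N + m, by rw [Function.iterate_add_apply, hN]⟩
  have all : ∀ k, (∃ N, b^[N] (f^[k] ⊤) = ⊥) → ∃ N, b^[N] ⊤ = ⊥ := by
    intro k
    induction k with
    | zero => exact id
    | succ k ih => exact fun h => ih (key k h)
  exact all n ⟨0, hfn⟩

end Lattice

section Alg

variable (S : ZinbielSuper K Z)

/-- homogeneous elements -/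
def Hom : Set Z := {x | x ∈ S.Z0 ∨ x ∈ S.Z1}

/-- graded subspaces -/
def Gr (M : Submodule K Z) : Prop := ∃ s : Set Z, s ⊆ Hom S ∧ M = Submodule.span K s

/-- product of subspaces -/
abbrev P (A B : Submodule K Z) : Submodule K Z := Submodule.map₂ S.mul A B

theorem hom_mul {x y : Z} (hx : x ∈ Hom S) (hy : y ∈ Hom S) : S.mul x y ∈ Hom S := by
  rcases hx with hx | hx <;> rcases hy with hy | hy
  · exact Or.inl (S.mul00 x hx y hy)
  · exact Or.inr (S.mul01 x hx y hy)
  · exact Or.inr (S.mul10 x hx y hy)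
  · exact Or.inl (S.mul11 x hx y hy)

theorem gr_top : Gr S ⊤ := by
  refine ⟨Hom S, subset_rfl, ?_⟩
  symm
  rw [eq_top_iff, ← S.compl.sup_eq_top]
  exact sup_le (fun x hx => Submodule.subset_span (Or.inl hx))
    (fun x hx => Submodule.subset_span (Or.inr hx))

theorem gr_mul {A B : Submodule K Z} (hA : Gr S A) (hB : Gr S B) : Gr S (P S A B) := by
  obtain ⟨s, hs, rfl⟩ := hA
  obtain ⟨t, ht, rfl⟩ := hB
  refine ⟨_, ?_, Submodule.map₂_span_span K S.mul s t⟩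
  rintro _ ⟨a, ha, b, hb, rfl⟩
  exact hom_mul S (hs ha) (ht hb)

theorem gr_sup {A B : Submodule K Z} (hA : Gr S A) (hB : Gr S B) : Gr S (A ⊔ B) := by
  obtain ⟨s, hs, rfl⟩ := hA
  obtain ⟨t, ht, rfl⟩ := hB
  exact ⟨s ∪ t, Set.union_subset hs ht, (Submodule.span_union s t).symm⟩

theorem gr_single {y : Z} (hy : y ∈ Hom S) : Gr S (Submodule.span K {y}) :=
  ⟨{y}, by simpa using hy, rfl⟩

theorem elt {a b c : Z} (ha : a ∈ Hom S) (hb : b ∈ Hom S) (hc : c ∈ Hom S) :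
    ∃ e : K, e * e = 1 ∧ S.mul (S.mul a b) c = S.mul a (S.mul b c) + e • S.mul a (S.mul c b) ∧
      S.mul (S.mul a c) b = S.mul a (S.mul c b) + e • S.mul a (S.mul b c) := by
  by_cases h : b ∈ S.Z0 ∨ c ∈ S.Z0
  · refine ⟨1, one_mul 1, ?_, ?_⟩
    · rw [S.zinb_even a b c ha hb hc h, map_add, one_smul]
    · rw [S.zinb_even a c b ha hc hb h.symm, map_add, one_smul]
  · have hb1 : b ∈ S.Z1 := by rcases hb with hb | hb <;> tauto
    have hc1 : c ∈ S.Z1 := by rcases hc with hc | hc <;> tauto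
    refine ⟨-1, by ring, ?_, ?_⟩
    · rw [S.zinb_odd a b c ha hb1 hc1, map_sub, neg_one_smul, sub_eq_add_neg]
    · rw [S.zinb_odd a c b ha hc1 hb1, map_sub, neg_one_smul, sub_eq_add_neg]

theorem P_comm {A B C : Submodule K Z} (hA : Gr S A) (hB : Gr S B) (hC : Gr S C) :
    P S (P S A B) C ≤ P S (P S A C) B := by
  obtain ⟨s, hs, rfl⟩ := hA
  obtain ⟨t, ht, rfl⟩ := hB
  obtain ⟨u, hu, rfl⟩ := hC
  simp only [P]
  rw [Submodule.map₂_span_span K S.mul s t, Submodule.map₂_span_span, Submodule.span_le]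
  rintro _ ⟨_, ⟨a, ha, b, hb, rfl⟩, c, hc, rfl⟩
  obtain ⟨e, he, h1, h2⟩ := elt S (hs ha) (ht hb) (hu hc)
  have : S.mul (S.mul a b) c = e • S.mul (S.mul a c) b := by
    rw [h1, h2, smul_add, smul_smul, he, one_smul, add_comm]
  simp only [SetLike.mem_coe]
  rw [this]
  exact Submodule.smul_mem _ _ (Submodule.apply_mem_map₂ _
    (Submodule.apply_mem_map₂ _ (Submodule.subset_span ha) (Submodule.subset_span hc))
    (Submodule.subset_span hb))

theorem P_assoc {A B C : Submodule K Z} (hA : Gr S A) (hB : Gr S B) (hC : Gr S C) :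
    P S A (P S B C) ≤ P S (P S A C) B ⊔ P S A (P S C B) := by
  obtain ⟨s, hs, rfl⟩ := hA
  obtain ⟨t, ht, rfl⟩ := hB
  obtain ⟨u, hu, rfl⟩ := hC
  have : P S (span K s) (P S (span K t) (span K u)) =
      span K (Set.image2 (fun x y => S.mul x y) s (Set.image2 (fun x y => S.mul x y) t u)) := by
    simp only [P]
    rw [Submodule.map₂_span_span K S.mul t u, Submodule.map₂_span_span]
  rw [this, Submodule.span_le]
  rintro _ ⟨a, ha, _, ⟨b, hb, c, hc, rfl⟩, rfl⟩
  obtain ⟨e, he, h1, h2⟩ := elt S (hs ha) (ht hb) (hu hc)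
  have h3 : S.mul a (S.mul b c) = e • S.mul (S.mul a c) b + (-e) • S.mul a (S.mul c b) := by
    rw [h2, smul_add, smul_smul, he, one_smul, neg_smul]; abel
  simp only [SetLike.mem_coe]
  rw [h3]
  have ha := Submodule.subset_span (R := K) ha
  have hb := Submodule.subset_span (R := K) hb
  have hc := Submodule.subset_span (R := K) hc
  exact Submodule.add_mem_sup
    (Submodule.smul_mem _ _ (Submodule.apply_mem_map₂ _ (Submodule.apply_mem_map₂ _ ha hc) hb))
    (Submodule.smul_mem _ _ (Submodule.apply_mem_map₂ _ ha (Submodule.apply_mem_map₂ _ hc hb)))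

/-- induction over homogeneous elements -/
theorem hom_ext {p q : Z →ₗ[K] Z} (h : ∀ x ∈ Hom S, p x = q x) : p = q := by
  obtain ⟨s, hs, ht⟩ := gr_top S
  exact LinearMap.ext_on ht.symm (fun x hx => h x (hs hx))

/-- The twisting operator for a homogeneous element. -/
theorem twist {y : Z} (hy : y ∈ Hom S) : ∃ (s : Z →ₗ[K] Z) (e : K), s * s = 1 ∧ e ≠ 0 ∧
    s * S.mul y = e • (S.mul y * s) ∧
    (∀ a, S.mul (S.mul y a) y = S.mul y (S.mul a y) + S.mul y (S.mul y (s a))) ∧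
    (∀ a u, S.mul (S.mul y a) (S.mul y u) = S.mul y (S.mul a (S.mul y u)) +
      S.mul y (S.mul (S.mul y (s a)) u)) := by
  rcases id hy with h0 | h1
  · refine ⟨1, 1, one_mul 1, one_ne_zero, by simp, ?_, ?_⟩
    · intro a
      have : S.mul.flip y ∘ₗ S.mul y =
        S.mul y ∘ₗ S.mul.flip y + S.mul y ∘ₗ S.mul y := by
        apply hom_ext S
        intro x hx
        simp [S.zinb_even y x y hy hx hy (Or.inr h0)]
      simpa using LinearMap.congr_fun this a
    · intro a u
      have h1 : ∀ u ∈ Hom S, ∀ a ∈ Hom S, S.mul (S.mul y a) (S.mul y u) =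
          S.mul y (S.mul a (S.mul y u)) + S.mul y (S.mul (S.mul y a) u) := by
        intro u hu a ha
        have hyu := hom_mul S hy hu
        by_cases h : a ∈ S.Z0 ∨ u ∈ S.Z0
        · rw [S.zinb_even y a (S.mul y u) hy ha hyu (h.imp id (S.mul00 y h0 u)),
            S.zinb_even y a u hy ha hu h, S.zinb_even y u a hy hu ha h.symm, map_add,
            add_comm (S.mul u a)]
        · have ha1 : a ∈ S.Z1 := by rcases ha with ha | ha <;> tauto
          have hu1 : u ∈ S.Z1 := by rcases hu with hu | hu <;> tauto
          rw [S.zinb_odd y a (S.mul y u) hy ha1 (S.mul01 y h0 u hu1),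
            S.zinb_odd y a u hy ha1 hu1, S.zinb_odd y u a hy hu1 ha1]
          simp only [map_sub]; abel
      have h2 : ∀ u ∈ Hom S, S.mul.flip (S.mul y u) ∘ₗ S.mul y =
          S.mul y ∘ₗ S.mul.flip (S.mul y u) + S.mul y ∘ₗ S.mul.flip u ∘ₗ S.mul y := by
        intro u hu
        apply hom_ext S
        intro x hx
        simpa using h1 u hu x hx
      have h3 : S.mul (S.mul y a) ∘ₗ S.mul y =
          S.mul y ∘ₗ S.mul a ∘ₗ S.mul y + S.mul y ∘ₗ S.mul (S.mul y a) := by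
        apply hom_ext S
        intro u hu
        simpa using LinearMap.congr_fun (h2 u hu) a
      simpa using LinearMap.congr_fun h3 u
  · obtain ⟨s, s0, s1⟩ : ∃ s : Z →ₗ[K] Z, (∀ x ∈ S.Z0, s x = x) ∧ (∀ x ∈ S.Z1, s x = -x) := by
      refine ⟨LinearMap.ofIsCompl S.compl S.Z0.subtype (-S.Z1.subtype), ?_, ?_⟩
      · intro x hx
        exact LinearMap.ofIsCompl_apply_left S.compl (⟨x, hx⟩ : S.Z0)
      · intro x hx
        exact LinearMap.ofIsCompl_apply_right S.compl (⟨x, hx⟩ : S.Z1)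
    refine ⟨s, -1, ?_, by simp, ?_, ?_, ?_⟩
    · apply hom_ext S
      rintro x (hx | hx)
      · simp [s0 x hx]
      · simp [s1 x hx]
    · apply hom_ext S
      rintro x (hx | hx)
      · simp [s0 x hx, s1 _ (S.mul10 y h1 x hx)]
      · simp [s1 x hx, s0 _ (S.mul11 y h1 x hx)]
    · intro a
      have : S.mul.flip y ∘ₗ S.mul y =
        S.mul y ∘ₗ S.mul.flip y + S.mul y ∘ₗ S.mul y ∘ₗ s := by
        apply hom_ext S
        rintro x (hx | hx)
        · simp [S.zinb_even y x y hy (Or.inl hx) hy (Or.inl hx), s0 x hx]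
        · simp [S.zinb_odd y x y hy hx h1, s1 x hx, sub_eq_add_neg]
      simpa using LinearMap.congr_fun this a
    · intro a u
      have h1 : ∀ u ∈ Hom S, ∀ a ∈ Hom S, S.mul (S.mul y a) (S.mul y u) =
          S.mul y (S.mul a (S.mul y u)) + S.mul y (S.mul (S.mul y (s a)) u) := by
        intro u hu a ha
        have hyu := hom_mul S hy hu
        rcases id ha with ha0 | ha1
        · rw [S.zinb_even y a (S.mul y u) hy ha hyu (Or.inl ha0), s0 a ha0,
            S.zinb_even y a u hy ha hu (Or.inl ha0), S.zinb_even y u a hy hu ha (Or.inr ha0),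
            map_add, add_comm (S.mul u a)]
        · rcases id hu with hu0 | hu1
          · rw [S.zinb_odd y a (S.mul y u) hy ha1 (S.mul10 y h1 u hu0), s1 a ha1]
            simp only [map_neg, LinearMap.neg_apply]
            rw [S.zinb_even y a u hy ha hu (Or.inr hu0), S.zinb_even y u a hy hu ha (Or.inl hu0)]
            simp only [map_sub, map_add]; abel
          · rw [S.zinb_even y a (S.mul y u) hy ha hyu (Or.inr (S.mul11 y h1 u hu1)), s1 a ha1]
            simp only [map_neg, LinearMap.neg_apply]
            rw [S.zinb_odd y a u hy ha1 hu1, S.zinb_odd y u a hy hu1 ha1]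
            simp only [map_sub, map_add]; abel
      have h2 : ∀ u ∈ Hom S, S.mul.flip (S.mul y u) ∘ₗ S.mul y =
          S.mul y ∘ₗ S.mul.flip (S.mul y u) + S.mul y ∘ₗ S.mul.flip u ∘ₗ S.mul y ∘ₗ s := by
        intro u hu
        apply hom_ext S
        intro x hx
        simpa using h1 u hu x hx
      have h3 : S.mul (S.mul y a) ∘ₗ S.mul y =
          S.mul y ∘ₗ S.mul a ∘ₗ S.mul y + S.mul y ∘ₗ S.mul (S.mul y (s a)) := by
        apply hom_ext S
        intro u hu
        simpa using LinearMap.congr_fun (h2 u hu) a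
      simpa using LinearMap.congr_fun h3 u

open Polynomial in
/-- Left multiplications by homogeneous elements are nilpotent. -/
theorem left_nil [FiniteDimensional K Z] {y : Z} (hy : y ∈ Hom S) :
    ∃ n, (S.mul y) ^ n = 0 := by
  obtain ⟨s, e, hss, he, hsl, t1, t2⟩ := twist S hy
  set l : Module.End K Z := S.mul y with hl
  let R : Z →ₗ[K] Module.End K Z := S.mul.flip
  have r1 : R y * l = l * R y + l * l * s := by
    ext a; simpa [R] using t1 a
  have r2 : ∀ u, R (l u) * l = l * R (l u) + l * R u * l * s := by
    intro u; ext a; simpa [R] using t2 a u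
  let Φ : K[X] → Module.End K Z := fun p => p.coeff 0 • 1 + R (aeval l (divX p) y)
  have hΦ : ∀ p, Φ p * l = l * Φ p + l * Φ (divX p) * l * s := by
    intro p
    have h1 : aeval l (divX p) y = l (aeval l (divX (divX p)) y) + (divX p).coeff 0 • y := by
      conv_lhs => rw [← X_mul_divX_add (divX p)]
      simp [Algebra.algebraMap_eq_smul_one]
    simp only [Φ]
    rw [h1]
    simp only [map_add, map_smul, add_mul, mul_add, smul_mul_assoc, mul_smul_comm, r1, r2,
      one_mul, mul_one, smul_add]
    abel
  have main : ∀ n, ∀ p : K[X], p.natDegree = n → p ≠ 0 → ∀ a b, l ^ b * Φ p * l ^ a = 0 →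
      ∃ n, l ^ n = 0 := by
    intro n
    induction n with
    | zero =>
      intro p hp hp0 a b h
      obtain ⟨c, rfl⟩ := natDegree_eq_zero.mp hp
      have hc : c ≠ 0 := by rintro rfl; simp at hp0
      simp [Φ, ← pow_add, hc] at h
      exact ⟨_, h⟩
    | succ n ih =>
      intro p hp hp0 a b h
      have hd : (divX p).natDegree = n := by rw [natDegree_divX_eq_natDegree_tsub_one, hp]; rfl
      have hd0 : divX p ≠ 0 := by
        intro h0
        rw [divX_eq_zero_iff] at h0
        rw [h0, natDegree_C] at hp
        omega
      refine ih (divX p) hd hd0 (a + 1) (b + 1) ?_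
      have hs : ∀ k, s * l ^ k = e ^ k • (l ^ k * s) := by
        intro k
        induction k with
        | zero => simp
        | succ k ihk =>
          rw [pow_succ, ← mul_assoc, ihk, smul_mul_assoc, mul_assoc, hsl, mul_smul_comm, smul_smul,
            ← mul_assoc, pow_succ]
      have h2 : l ^ b * (l * Φ (divX p) * l * s) * l ^ a = 0 := by
        have h3 : l * Φ (divX p) * l * s = Φ p * l - l * Φ p := by rw [hΦ]; abel
        rw [h3, mul_sub, sub_mul]
        have e1 : l ^ b * (Φ p * l) * l ^ a = (l ^ b * Φ p * l ^ a) * l := by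
          simp only [mul_assoc]; rw [← pow_succ', ← pow_succ]
        have e2 : l ^ b * (l * Φ p) * l ^ a = l * (l ^ b * Φ p * l ^ a) := by
          simp only [← mul_assoc]; rw [← pow_succ', ← pow_succ]
        rw [e1, e2, h, zero_mul, mul_zero, sub_zero]
      have h4 : l ^ b * (l * Φ (divX p) * l * s) * l ^ a =
          e ^ a • (l ^ (b + 1) * Φ (divX p) * l ^ (a + 1) * s) := by
        rw [mul_assoc, mul_assoc _ s, hs, pow_succ l b, pow_succ' l a]
        simp only [mul_smul_comm, mul_assoc]
      rw [h4, smul_eq_zero] at h2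
      have h5 := h2.resolve_left (pow_ne_zero _ he)
      have h6 := congrArg (· * s) h5
      simpa [mul_assoc, hss] using h6
  have hc : l.charpoly ≠ 0 := (LinearMap.charpoly_monic l).ne_zero
  refine main _ (X * l.charpoly) rfl (mul_ne_zero X_ne_zero hc) 0 0 ?_
  have hdx : divX (X * l.charpoly) = l.charpoly := by
    ext n; simp [coeff_divX]
  simp only [Φ, hdx, LinearMap.aeval_self_charpoly]
  simp

/-- Right multiplications by homogeneous elements are nilpotent. -/
theorem right_nil [FiniteDimensional K Z] {y : Z} (hy : y ∈ Hom S) :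
    ∃ n, (S.mul.flip y : Module.End K Z) ^ n = 0 := by
  rcases id hy with h0 | h1
  · obtain ⟨n, hn⟩ := left_nil S hy
    have hc : ∀ k : ℕ, S.mul (((S.mul y) ^ k : Module.End K Z) y) y =
        ((k : K) + 1) • ((S.mul y) ^ (k + 1) : Module.End K Z) y ∧
        (((S.mul y) ^ k : Module.End K Z) y ∈ S.Z0) := by
      intro k
      induction k with
      | zero => simpa using h0
      | succ k ih =>
        obtain ⟨ih, hm⟩ := ih
        rw [pow_succ' _ k]
        refine ⟨?_, S.mul00 y h0 _ hm⟩
        rw [Module.End.mul_apply, S.zinb_even y _ y hy (Or.inl hm) hy (Or.inr h0), ih]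
        rw [pow_succ' _ (k+1), Module.End.mul_apply, pow_succ' _ k, Module.End.mul_apply]
        push_cast
        simp only [map_add, map_smul, add_smul, one_smul]
    have hr : ∀ k : ℕ, ∃ c : K, (S.mul.flip y : Module.End K Z) ^ (k + 1) =
        c • S.mul.flip (((S.mul y) ^ k : Module.End K Z) y) := by
      intro k
      induction k with
      | zero => exact ⟨1, by simp⟩
      | succ k ih =>
        obtain ⟨c, hk⟩ := ih
        refine ⟨c * ((k : K) + 1 + 1), ?_⟩
        rw [pow_succ', hk]
        apply hom_ext S
        intro x hx
        obtain ⟨h2, hm⟩ := hc k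
        have h3 := S.zinb_even x _ y hx (Or.inl hm) hy (Or.inr h0)
        simp only [Module.End.mul_apply, LinearMap.smul_apply, map_smul, LinearMap.flip_apply]
        rw [h3, h2, pow_succ' _ k, Module.End.mul_apply, mul_smul]
        simp only [map_add, map_smul, add_smul, one_smul]
    obtain ⟨c, hcn⟩ := hr n
    exact ⟨n + 1, by rw [hcn, hn]; simp⟩
  · refine ⟨2, ?_⟩
    apply hom_ext S
    intro x hx
    rw [pow_two]
    simp [S.zinb_odd x y y hx h1 h1]

theorem iter_map (l : Module.End K Z) (n : ℕ) (M : Submodule K Z) :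
    (fun M => Submodule.map l M)^[n] M = Submodule.map (l ^ n) M := by
  induction n with
  | zero => simp [Module.End.one_eq_id]
  | succ n ih =>
    rw [Function.iterate_succ_apply', ih, pow_succ', Module.End.mul_eq_comp, Submodule.map_comp]

theorem left_nil' [FiniteDimensional K Z] {y : Z} (hy : y ∈ Hom S) :
    ∃ n, (fun M => P S (Submodule.span K {y}) M)^[n] ⊤ = ⊥ := by
  obtain ⟨n, hn⟩ := left_nil S hy
  refine ⟨n, ?_⟩
  have : (fun M => P S (Submodule.span K {y}) M) = fun M => Submodule.map (S.mul y) M := by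
    funext M; exact congrFun (Submodule.map₂_span_singleton_eq_map S.mul y) M
  rw [this, iter_map, hn, Submodule.map_zero]

theorem right_nil' [FiniteDimensional K Z] {y : Z} (hy : y ∈ Hom S) :
    ∃ n, (fun M => P S M (Submodule.span K {y}))^[n] ⊤ = ⊥ := by
  obtain ⟨n, hn⟩ := right_nil S hy
  refine ⟨n, ?_⟩
  have : (fun M => P S M (Submodule.span K {y})) = fun M => Submodule.map (S.mul.flip y) M := by
    funext M; exact Submodule.map₂_span_singleton_eq_map_flip _ _ _
  rw [this, iter_map, hn, Submodule.map_zero]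

/-- Codimension-one graded subspaces. -/
theorem exists_codim_one [FiniteDimensional K Z] {W V : Submodule K Z} (hW : Gr S W) (hV : Gr S V)
    (hWV : W < V) : ∃ H y, Gr S H ∧ W ≤ H ∧ H < V ∧ y ∈ Hom S ∧ V = H ⊔ Submodule.span K {y} := by
  obtain ⟨H, ⟨hG, hWH, hHV⟩, hmax⟩ := WellFounded.has_min
    (wellFounded_gt (α := Submodule K Z)) {H | Gr S H ∧ W ≤ H ∧ H < V} ⟨W, hW, le_rfl, hWV⟩
  obtain ⟨s, hs, hVs⟩ := id hV
  obtain ⟨y, hys, hyH⟩ : ∃ y ∈ s, y ∉ H := by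
    by_contra! hcon
    exact hHV.not_ge (hVs ▸ Submodule.span_le.mpr hcon)
  have hyV : y ∈ V := hVs ▸ Submodule.subset_span hys
  refine ⟨H, y, hG, hWH, hHV, hs hys, ?_⟩
  have hle : H ⊔ Submodule.span K {y} ≤ V :=
    sup_le hHV.le ((Submodule.span_singleton_le_iff_mem _ _).mpr hyV)
  by_contra hne
  refine hmax (H ⊔ Submodule.span K {y}) ⟨gr_sup S hG (gr_single S (hs hys)),
    hWH.trans le_sup_left, lt_of_le_of_ne hle (Ne.symm hne)⟩ ?_
  refine lt_of_le_of_ne le_sup_left ?_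
  intro h
  exact hyH (h ▸ Submodule.mem_sup_right (Submodule.mem_span_singleton_self y))

theorem gr_iter {f : Submodule K Z → Submodule K Z} (hf : ∀ M, Gr S M → Gr S (f M)) (n : ℕ)
    {M : Submodule K Z} (hM : Gr S M) : Gr S (f^[n] M) := by
  induction n with
  | zero => exact hM
  | succ n ih => rw [Function.iterate_succ_apply']; exact hf _ ih

theorem gr_bot : Gr S ⊥ := ⟨∅, Set.empty_subset _, by simp⟩

theorem right_nilpotent [FiniteDimensional K Z] (V : Submodule K Z) (hV : Gr S V) :
    ∃ n, (fun M => P S M V)^[n] ⊤ = ⊥ := by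
  induction V using WellFoundedLT.induction with
  | ind V ih =>
  by_cases h0 : V = ⊥
  · subst h0; exact ⟨1, by simp [P]⟩
  obtain ⟨H, y, hH, -, hHV, hy, hVe⟩ := exists_codim_one S (gr_bot S) hV (bot_lt_iff_ne_bot.mpr h0)
  obtain ⟨n, hn⟩ := ih H hHV hH
  obtain ⟨m, hm⟩ := right_nil' S hy
  have hYG := gr_single S hy
  set Y := Submodule.span K {y} with hY
  refine nil_comb (fun M => P S M H) (fun M => P S M Y) _
    (fun a b => Submodule.map₂_sup_left _ _ _ _) (fun a b => Submodule.map₂_sup_left _ _ _ _)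
    (Submodule.map₂_bot_left _ _) (Submodule.map₂_bot_left _ _)
    (fun x => by rw [hVe]; exact Submodule.map₂_sup_right _ _ _ _) n m hn hm ?_
  intro k i
  refine ⟨i, ?_⟩
  rw [Function.iterate_succ_apply']
  have hG : Gr S ((fun M => P S M H)^[k] ⊤) := gr_iter S (fun M hM => gr_mul S hM hH) k (gr_top S)
  generalize (fun M => P S M H)^[k] ⊤ = M at hG
  induction i with
  | zero => exact le_rfl
  | succ i ihi =>
    rw [Function.iterate_succ_apply', Function.iterate_succ_apply']
    have hG2 : Gr S ((fun M => P S M Y)^[i] M) := gr_iter S (fun M hM => gr_mul S hM hYG) i hG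
    refine (P_comm S hG2 hYG hH).trans ?_
    exact Submodule.map₂_le_map₂ ihi (hVe ▸ le_sup_right)

theorem left_nilpotent [FiniteDimensional K Z] (V : Submodule K Z) (hV : Gr S V)
    (hVV : P S V V ≤ V) : ∃ n, (fun M => P S V M)^[n] ⊤ = ⊥ := by
  induction V using WellFoundedLT.induction with
  | ind V ih =>
  by_cases h0 : V = ⊥
  · subst h0; exact ⟨1, by simp [P]⟩
  have hlt : P S V V < V := by
    refine lt_of_le_of_ne hVV ?_
    intro heq
    obtain ⟨n, hn⟩ := right_nilpotent S V hV
    have h1 : ∀ k, V ≤ (fun M => P S M V)^[k] ⊤ := by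
      intro k
      induction k with
      | zero => exact le_top
      | succ k ihk =>
        rw [Function.iterate_succ_apply']
        calc V = P S V V := heq.symm
          _ ≤ _ := Submodule.map₂_le_map₂ ihk le_rfl
    exact h0 (le_bot_iff.mp (hn ▸ h1 n))
  obtain ⟨H, y, hH, hVH, hHV, hy, hVe⟩ := exists_codim_one S (gr_mul S hV hV) hV hlt
  have hYG := gr_single S hy
  obtain ⟨m, hm⟩ := left_nil' S hy
  set Y := Submodule.span K {y} with hY
  have hYV : Y ≤ V := hVe ▸ le_sup_right
  obtain ⟨n, hn⟩ := ih H hHV hH ((Submodule.map₂_le_map₂ hHV.le hHV.le).trans hVH)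
  have hHY : P S H Y ≤ H := (Submodule.map₂_le_map₂ hHV.le hYV).trans hVH
  have hYY : P S Y Y ≤ H := (Submodule.map₂_le_map₂ hYV hYV).trans hVH
  have k1 : ∀ M, Gr S M → P S H (P S Y (P S H M)) ≤ P S H (P S H M) := by
    intro M hM
    have hHM := gr_mul S hH hM
    refine (P_assoc S hH hYG hHM).trans (sup_le ?_ ?_)
    · exact (P_comm S hH hHM hYG).trans (Submodule.map₂_le_map₂ hHY le_rfl)
    · exact Submodule.map₂_le_map₂ le_rfl
        ((P_comm S hH hM hYG).trans (Submodule.map₂_le_map₂ hHY le_rfl))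
  have k2 : ∀ M, Gr S M → P S Y (P S Y (P S H M)) ≤ P S H (P S H M) ⊔ P S Y (P S H M) := by
    intro M hM
    have hHM := gr_mul S hH hM
    refine (P_assoc S hYG hYG hHM).trans (sup_le_sup ?_ ?_)
    · exact (P_comm S hYG hHM hYG).trans (Submodule.map₂_le_map₂ hYY le_rfl)
    · exact Submodule.map₂_le_map₂ le_rfl
        ((P_comm S hH hM hYG).trans (Submodule.map₂_le_map₂ hHY le_rfl))
  refine nil_comb (fun M => P S H M) (fun M => P S Y M) _
    (fun a b => Submodule.map₂_sup_right _ _ _ _) (fun a b => Submodule.map₂_sup_right _ _ _ _)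
    (Submodule.map₂_bot_right _ _) (Submodule.map₂_bot_right _ _)
    (fun x => by rw [hVe]; exact Submodule.map₂_sup_left _ _ _ _) n m hn hm ?_
  intro k i
  refine ⟨0, ?_⟩
  rcases k with _ | k
  · exact Submodule.map₂_le_map₂ le_rfl le_top
  have hmono : Monotone (fun M => P S H M) := fun a b h => Submodule.map₂_le_map₂ le_rfl h
  have hdec : (fun M => P S H M)^[k+1] ⊤ ≤ (fun M => P S H M)^[k] ⊤ := by
    rw [Function.iterate_succ_apply]
    exact hmono.iterate k le_top
  have hG : Gr S ((fun M => P S H M)^[k] ⊤) := gr_iter S (fun M hM => gr_mul S hH hM) k (gr_top S)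
  simp only [Function.iterate_zero, id, Function.iterate_succ_apply' _ (k+1)]
  simp only [Function.iterate_succ_apply' _ k] at hdec ⊢
  generalize (fun M => P S H M)^[k] ⊤ = M at hG hdec
  have hi : (fun M => P S Y M)^[i] (P S H M) ≤ P S H M ⊔ P S Y (P S H M) := by
    induction i with
    | zero => exact le_sup_left
    | succ i ihi =>
      rw [Function.iterate_succ_apply']
      refine (Submodule.map₂_le_map₂ le_rfl ihi).trans ?_
      rw [Submodule.map₂_sup_right]
      refine sup_le le_sup_right ((k2 M hG).trans (sup_le_sup ?_ le_rfl))
      exact Submodule.map₂_le_map₂ le_rfl hdec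
  refine (Submodule.map₂_le_map₂ le_rfl hi).trans ?_
  rw [Submodule.map₂_sup_right]
  exact sup_le le_rfl (k1 M hG)

theorem nilpotent [FiniteDimensional K Z] :
    ∃ n, (fun M => P S ⊤ M ⊔ P S M ⊤)^[n] ⊤ = ⊥ := by
  obtain ⟨n, hn⟩ := left_nilpotent S ⊤ (gr_top S) le_top
  obtain ⟨m, hm⟩ := right_nilpotent S ⊤ (gr_top S)
  refine nil_comb (fun M => P S ⊤ M) (fun M => P S M ⊤) _
    (fun a b => Submodule.map₂_sup_right _ _ _ _) (fun a b => Submodule.map₂_sup_left _ _ _ _)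
    (Submodule.map₂_bot_right _ _) (Submodule.map₂_bot_left _ _)
    (fun x => rfl) n m hn hm ?_
  intro k i
  refine ⟨0, ?_⟩
  rcases k with _ | k
  · exact Submodule.map₂_le_map₂ le_rfl le_top
  have hG : Gr S ((fun M => P S ⊤ M)^[k] ⊤) :=
    gr_iter S (fun M hM => gr_mul S (gr_top S) hM) k (gr_top S)
  simp only [Function.iterate_zero, id, Function.iterate_succ_apply' _ (k+1)]
  simp only [Function.iterate_succ_apply' _ k]
  generalize (fun M => P S ⊤ M)^[k] ⊤ = M at hG
  refine Submodule.map₂_le_map₂ le_rfl ?_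
  induction i with
  | zero => exact le_rfl
  | succ i ihi =>
    rw [Function.iterate_succ_apply']
    refine (Submodule.map₂_le_map₂ ihi le_rfl).trans ?_
    exact (P_comm S (gr_top S) hG (gr_top S)).trans (Submodule.map₂_le_map₂ le_top le_rfl)

theorem minimal_annihilates [FiniteDimensional K Z] {I : Submodule K Z}
    (hI : IsMinimalIdeal S I) : ∀ x, ∀ a ∈ I, S.mul x a = 0 ∧ S.mul a x = 0 := by
  obtain ⟨hid, hne, hmin⟩ := hI
  obtain ⟨n, hn⟩ := nilpotent S
  set b : Submodule K Z → Submodule K Z := fun M => P S ⊤ M ⊔ P S M ⊤ with hb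
  have bm : Monotone b := fun M N h =>
    sup_le_sup (Submodule.map₂_le_map₂ le_rfl h) (Submodule.map₂_le_map₂ h le_rfl)
  have hbl : ∀ M x a, a ∈ M → S.mul x a ∈ b M ∧ S.mul a x ∈ b M := fun M x a ha =>
    ⟨Submodule.mem_sup_left (Submodule.apply_mem_map₂ _ Submodule.mem_top ha),
      Submodule.mem_sup_right (Submodule.apply_mem_map₂ _ ha Submodule.mem_top)⟩
  have key : ∀ k, I ≤ b^[k] ⊤ ∨ ∀ x, ∀ a ∈ I, S.mul x a = 0 ∧ S.mul a x = 0 := by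
    intro k
    induction k with
    | zero => exact Or.inl le_top
    | succ k ih =>
      rcases ih with ih | ih
      · have hdec : b^[k+1] ⊤ ≤ b^[k] ⊤ := by
          rw [Function.iterate_succ_apply]
          exact bm.iterate k le_top
        have hid2 : IsIdeal S (I ⊓ b^[k+1] ⊤) := by
          rintro x a ⟨ha, ha2⟩
          have h2 := hbl _ x a (hdec ha2)
          rw [← Function.iterate_succ_apply' b] at h2
          exact ⟨⟨(hid x a ha).1, h2.1⟩, ⟨(hid x a ha).2, h2.2⟩⟩
        rcases hmin _ hid2 inf_le_left with h | h
        · right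
          intro x a ha
          have h2 := hbl _ x a (ih ha)
          rw [← Function.iterate_succ_apply' b] at h2
          have h3 : ∀ z, z ∈ I → z ∈ b^[k+1] ⊤ → z = 0 := fun z h4 h5 =>
            (Submodule.mem_bot K).mp (h ▸ (⟨h4, h5⟩ : z ∈ I ⊓ b^[k+1] ⊤))
          exact ⟨h3 _ (hid x a ha).1 h2.1, h3 _ (hid x a ha).2 h2.2⟩
        · exact Or.inl (inf_eq_left.mp h)
      · exact Or.inr ih
  rcases key n with h | h
  · rw [hn] at h
    exact absurd (le_bot_iff.mp h) hne
  · exact h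

end Alg

end ZinbielAux

/-- If `I` is a minimal ideal of a finite-dimensional Zinbiel superalgebra and `J ⊆ I` is
a minimal right ideal, then `I = J`. -/
theorem minimalIdeal_eq_minimalRightIdeal (K : Type*) [Field K] (Z : Type*)
    [AddCommGroup Z] [Module K Z] [FiniteDimensional K Z] (S : ZinbielSuper K Z)
    (I J : Submodule K Z) (hI : IsMinimalIdeal S I) (hJ : IsMinimalRightIdeal S J)
    (hJI : J ≤ I) : I = J := by
  have h := ZinbielAux.minimal_annihilates S hI
  have hJid : IsIdeal S J := by
    intro x a ha
    rw [(h x a (hJI ha)).1, (h x a (hJI ha)).2]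
    exact ⟨J.zero_mem, J.zero_mem⟩
  rcases hI.2.2 J hJid hJI with h0 | h0
  · exact absurd h0 hJ.2.1
  · exact h0.symm
end
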